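/- (Lemma 3: asymptotic estimates in the presence of three blow-up points.) Under the blow-up setup with three blow-up points, where x_i is the principal blow-up point and y_i, t_i are the two other blow-up points, and with v_i converging in C²_loc(ℝ²) to u₀ solving −Δu₀ = V(0) e^{u₀} in ℝ² (V(0) = lim_i V_i(x_i) > 0), the following holds: for all ε > 0 and ε' ∈ (0, 1/4) there exist k = k(ε, ε') > 0, i₀ = i₀(ε, ε') ∈ ℕ, and constants C_{ε,ε'} > 0, C > 0, C₁ > 0, C₂ > 0, m ∈ ℝ, such that for all i ≥ i₀, all j ∈ {1, 2}, and all θ with k ≤ |θ| ≤ δ_i ε' / r_i: (i) (−4 − ε) log|θ| − C_{ε,ε'} ≤ v_i(θ) ≤ (−4 + ε) log|θ| + C_{ε,ε'}; and (ii) |∂_j v_i(θ) − ∂_j u₀(θ) − m (r_i/δ_i)| ≤ ε/|θ| + C (r_i/δ_i)² |θ| + C₁ r_i / d(x_i, y_i) + C₂ r_i / d(x_i, t_i). -/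

import Mathlib

open MeasureTheory Filter Metric

abbrev E2 := EuclideanSpace ℝ (Fin 2)

noncomputable def pd (j : Fin 2) (u : E2 → ℝ) (x : E2) : ℝ :=
  fderiv ℝ u x (EuclideanSpace.single j 1)

noncomputable def lapl (u : E2 → ℝ) (x : E2) : ℝ :=
  pd 0 (pd 0 u) x + pd 1 (pd 1 u) x

/-!
Let `κ = r / δ` and let `K_j` be the kernel `∂_j log |x|`. A cutoff at scale `1 / κ` represents
`∂_j v` on the inner half of the rescaled ball as the convolution of `-(1 / 2π) K_j` with `W eᵛ`,
up to an error `O(κ)`: since `v` is superharmonic its circle means decrease, so the bound on the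
circle `|y| = 3/8` controls the means of `v` on the whole annulus where the cutoff acts. In the
limit `∂_j u₀ = -(1 / 2π) V₀ e^{u₀} * K_j` on the plane, and the virial (Pohozaev) identity
applied to this formula forces `∫ V₀ e^{u₀} = 8π`. This is all of the limiting local mass, so none
is left in the neck, where `|z|² eᵛ` is therefore small. The representation then gives `|∂_j v + 4
K_j| ≤ ε / |θ| + O(κ)` in the neck. Integration along rays yields the logarithmic estimate.
Subtracting the same estimate for `u₀` and absorbing `κ ≤ ε / |θ| + κ² |θ| / ε` yields the
gradient estimate, with `m = 0`.
-/

namespace BlowUp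

open scoped Real Topology

section Calculus

variable {f g : E2 → ℝ} {x : E2}

theorem norm_sq_eq_add (w : E2) : ‖w‖ ^ 2 = w 0 ^ 2 + w 1 ^ 2 := by
  simp [EuclideanSpace.real_norm_sq_eq]

theorem abs_apply_le_norm (w : E2) (j : Fin 2) : |w j| ≤ ‖w‖ := by
  simpa using PiLp.norm_apply_le w j

theorem eq_smul_single_add_smul_single (w : E2) :
    w = w 0 • EuclideanSpace.single 0 (1 : ℝ) + w 1 • EuclideanSpace.single 1 (1 : ℝ) := by
  ext i; fin_cases i <;> simp

theorem fderiv_apply_eq_pd (f : E2 → ℝ) (x w : E2) :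
    fderiv ℝ f x w = w 0 * pd 0 f x + w 1 * pd 1 f x := by
  conv_lhs => rw [eq_smul_single_add_smul_single w]
  simp [pd]

theorem pd_congr (h : f =ᶠ[𝓝 x] g) (j : Fin 2) : pd j f x = pd j g x := by
  rw [pd, pd, h.fderiv_eq]

theorem eventuallyEq_pd (h : f =ᶠ[𝓝 x] g) (j : Fin 2) : pd j f =ᶠ[𝓝 x] pd j g :=
  h.eventuallyEq_nhds.mono fun _ hz => pd_congr hz j

theorem lapl_congr (h : f =ᶠ[𝓝 x] g) : lapl f x = lapl g x := by
  rw [lapl, lapl, pd_congr (eventuallyEq_pd h 0), pd_congr (eventuallyEq_pd h 1)]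

@[simp] theorem pd_const (j : Fin 2) (c : ℝ) (x : E2) : pd j (fun _ => c) x = 0 := by
  simp [pd]

theorem pd_add_const (f : E2 → ℝ) (c : ℝ) (j : Fin 2) : pd j (fun z => f z + c) = pd j f := by
  ext x; simp only [pd, fderiv_add_const]

theorem lapl_add_const (f : E2 → ℝ) (c : ℝ) : lapl (fun z => f z + c) = lapl f := by
  ext x; simp only [lapl, pd_add_const]

theorem pd_add (hf : DifferentiableAt ℝ f x) (hg : DifferentiableAt ℝ g x) (j : Fin 2) :
    pd j (fun z => f z + g z) x = pd j f x + pd j g x := by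
  simp [pd, fderiv_fun_add hf hg]

theorem pd_mul (hf : DifferentiableAt ℝ f x) (hg : DifferentiableAt ℝ g x) (j : Fin 2) :
    pd j (fun z => f z * g z) x = pd j f x * g x + f x * pd j g x := by
  simp [pd, fderiv_fun_mul hf hg, add_comm, mul_comm]

theorem pd_comp_add_smul (f : E2 → ℝ) (a : E2) (c : ℝ) (j : Fin 2) :
    pd j (fun z => f (a + c • z)) = fun z => c * pd j f (a + c • z) := by
  ext z
  simp [pd, fderiv_comp_smul (f := fun w => f (a + w)), fderiv_comp_add_left]

theorem lapl_comp_add_smul (f : E2 → ℝ) (a : E2) (c : ℝ) (x : E2) :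
    lapl (fun z => f (a + c • z)) x = c ^ 2 * lapl f (a + c • x) := by
  have pd_const_mul (j : Fin 2) (h : E2 → ℝ) : pd j (fun z => c * h z) x = c * pd j h x := by
    change fderiv ℝ (c • h) x _ = _
    simp [fderiv_const_smul_field, pd]
  have key (j : Fin 2) :
      pd j (pd j fun z => f (a + c • z)) x = c ^ 2 * pd j (pd j f) (a + c • x) := by
    rw [pd_comp_add_smul, pd_const_mul, pd_comp_add_smul]; ring
  rw [lapl, lapl, key, key]; ring

theorem pd_comp_smul (f : E2 → ℝ) (c : ℝ) (j : Fin 2) :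
    pd j (fun z => f (c • z)) = fun z => c * pd j f (c • z) := by
  simpa only [zero_add] using pd_comp_add_smul f 0 c j

theorem lapl_comp_smul (f : E2 → ℝ) (c : ℝ) (x : E2) :
    lapl (fun z => f (c • z)) x = c ^ 2 * lapl f (c • x) := by
  simpa only [zero_add] using lapl_comp_add_smul f 0 c x

theorem pd_comp_sub_left (f : E2 → ℝ) (y x : E2) (j : Fin 2) :
    pd j (fun z => f (y - z)) x = -pd j f (y - x) := by
  simpa [sub_eq_add_neg] using congrFun (pd_comp_add_smul f y (-1) j) x

theorem contDiffAt_pd (h : ContDiffAt ℝ 2 f x) (j : Fin 2) : ContDiffAt ℝ 1 (pd j f) x :=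
  (h.fderiv_right (m := 1) (by norm_num)).clm_apply contDiffAt_const

theorem contDiff_pd (h : ContDiff ℝ 2 f) (j : Fin 2) : ContDiff ℝ 1 (pd j f) :=
  contDiff_iff_contDiffAt.2 fun _ => contDiffAt_pd h.contDiffAt j

theorem continuous_pd (h : ContDiff ℝ 1 f) (j : Fin 2) : Continuous (pd j f) :=
  (h.continuous_fderiv one_ne_zero).clm_apply continuous_const

theorem continuous_lapl (h : ContDiff ℝ 2 f) : Continuous (lapl f) :=
  (continuous_pd (contDiff_pd h 0) 0).add (continuous_pd (contDiff_pd h 1) 1)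

theorem continuousAt_lapl (h : ContDiffAt ℝ 2 f x) : ContinuousAt (lapl f) x := by
  have key (j : Fin 2) : ContinuousAt (pd j (pd j f)) x :=
    ((contDiffAt_pd h j).fderiv_right (m := 0) (by norm_num)).continuousAt.clm_apply
      continuousAt_const
  exact (key 0).add (key 1)

theorem hasCompactSupport_pd (h : HasCompactSupport f) (j : Fin 2) : HasCompactSupport (pd j f) :=
  h.fderiv_apply ℝ _

theorem hasCompactSupport_lapl (h : HasCompactSupport f) : HasCompactSupport (lapl f) :=
  (hasCompactSupport_pd (hasCompactSupport_pd h 0) 0).add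
    (hasCompactSupport_pd (hasCompactSupport_pd h 1) 1)

theorem pd_comm (h : ContDiffAt ℝ 2 f x) (i j : Fin 2) : pd i (pd j f) x = pd j (pd i f) x := by
  have key (i j : Fin 2) : pd i (pd j f) x =
      fderiv ℝ (fderiv ℝ f) x (EuclideanSpace.single i 1) (EuclideanSpace.single j 1) := by
    have hd := (h.fderiv_right (m := 1) (by norm_num)).differentiableAt one_ne_zero
    change fderiv ℝ (fun y => fderiv ℝ f y (EuclideanSpace.single j 1)) x _ = _
    simp [fderiv_clm_apply hd (differentiableAt_const _)]
  rw [key, key]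
  exact (h.isSymmSndFDerivAt (by simp)) _ _

theorem lapl_mul (hf : ContDiffAt ℝ 2 f x) (hg : ContDiffAt ℝ 2 g x) :
    lapl (fun z => f z * g z) x =
      lapl f x * g x + 2 * (pd 0 f x * pd 0 g x + pd 1 f x * pd 1 g x) + f x * lapl g x := by
  have key (j : Fin 2) : pd j (pd j fun z => f z * g z) x =
      pd j (pd j f) x * g x + 2 * (pd j f x * pd j g x) + f x * pd j (pd j g) x := by
    have hd {h : E2 → ℝ} (hh : ContDiffAt ℝ 2 h x) : DifferentiableAt ℝ h x :=
      hh.differentiableAt two_ne_zero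
    have hd' {h : E2 → ℝ} (hh : ContDiffAt ℝ 2 h x) : DifferentiableAt ℝ (pd j h) x :=
      (contDiffAt_pd hh j).differentiableAt one_ne_zero
    have hev : pd j (fun z => f z * g z) =ᶠ[𝓝 x] fun z => pd j f z * g z + f z * pd j g z := by
      filter_upwards [hf.eventually (by simp), hg.eventually (by simp)] with z hfz hgz
      exact pd_mul (hfz.differentiableAt two_ne_zero) (hgz.differentiableAt two_ne_zero) j
    rw [pd_congr hev, pd_add ((hd' hf).fun_mul (hd hg)) ((hd hf).fun_mul (hd' hg)),
      pd_mul (hd' hf) (hd hg), pd_mul (hd hf) (hd' hg)]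
    ring
  simp only [lapl, key]; ring

end Calculus

section Kernel

/-- The kernel `∂ⱼ log |w| = wⱼ / |w|²`, i.e. `2π` times the `j`-th derivative of the fundamental
solution of the Laplacian in the plane. Division by zero makes it vanish at the origin. -/
noncomputable def gradLog (j : Fin 2) (w : E2) : ℝ := w j / ‖w‖ ^ 2

theorem abs_gradLog_le (j : Fin 2) (w : E2) : |gradLog j w| ≤ ‖w‖⁻¹ := by
  rcases eq_or_ne w 0 with rfl | hw
  · simp [gradLog]
  · calc |gradLog j w| = |w j| / ‖w‖ ^ 2 := by rw [gradLog, abs_div, abs_of_nonneg (sq_nonneg ‖w‖)]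
      _ ≤ ‖w‖ / ‖w‖ ^ 2 := by gcongr; exact abs_apply_le_norm w j
      _ = ‖w‖⁻¹ := by field_simp

theorem gradLog_neg (j : Fin 2) (w : E2) : gradLog j (-w) = -gradLog j w := by
  simp [gradLog, neg_div]

theorem gradLog_smul (j : Fin 2) (c : ℝ) (w : E2) : gradLog j (c • w) = c⁻¹ * gradLog j w := by
  rcases eq_or_ne c 0 with rfl | hc
  · simp [gradLog]
  · simp only [gradLog, PiLp.smul_apply, smul_eq_mul, norm_smul, Real.norm_eq_abs, mul_pow, sq_abs]
    field_simp

theorem measurable_gradLog (j : Fin 2) : Measurable (gradLog j) :=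
  (by fun_prop : Continuous fun w : E2 => w j).measurable.div (by fun_prop)

theorem pow_finrank_sub_one_smul_indicator_inv_ae_eq (a : ℝ) :
    (fun r : ℝ => r ^ (Module.finrank ℝ E2 - 1) • (Set.Iio a).indicator (·⁻¹) r)
      =ᵐ[volume.restrict (Set.Ioi 0)] (Set.Iio a).indicator (fun _ => (1 : ℝ)) := by
  filter_upwards [ae_restrict_mem measurableSet_Ioi] with r (hr : 0 < r)
  by_cases h : r < a <;> simp [h, hr.ne']

theorem indicator_ball_inv_norm_eq (a : ℝ) : (ball (0 : E2) a).indicator (fun w => ‖w‖⁻¹) =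
    fun w => (Set.Iio a).indicator (·⁻¹) ‖w‖ := by
  ext; simp [Set.indicator]

theorem integrableOn_inv_norm_ball (a : ℝ) : IntegrableOn (fun w : E2 => ‖w‖⁻¹) (ball 0 a) := by
  rw [← integrable_indicator_iff measurableSet_ball, indicator_ball_inv_norm_eq,
    integrable_fun_norm_addHaar volume (f := (Set.Iio a).indicator (·⁻¹)), IntegrableOn,
    integrable_congr (pow_finrank_sub_one_smul_indicator_inv_ae_eq a),
    integrable_indicator_iff measurableSet_Iio, IntegrableOn,
    Measure.restrict_restrict measurableSet_Iio, Set.Iio_inter_Ioi]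
  exact integrableOn_const (by simp)

theorem setIntegral_inv_norm_ball {a : ℝ} (ha : 0 ≤ a) :
    ∫ w in ball (0 : E2) a, ‖w‖⁻¹ = 2 * π * a := by
  rw [← integral_indicator measurableSet_ball, indicator_ball_inv_norm_eq,
    integral_fun_norm_addHaar volume,
    integral_congr_ae (pow_finrank_sub_one_smul_indicator_inv_ae_eq a),
    integral_indicator measurableSet_Iio, Measure.restrict_restrict measurableSet_Iio,
    Set.Iio_inter_Ioi]
  simp [Measure.real, EuclideanSpace.volume_ball_fin_two, ha, Real.pi_nonneg, mul_assoc]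

theorem integrableOn_inv_norm_sub_ball (x : E2) (a : ℝ) :
    IntegrableOn (fun w => ‖x - w‖⁻¹) (ball x a) := by
  have hpre : (fun w => x - w) ⁻¹' ball 0 a = ball x a := by
    ext; simp [dist_eq_norm, norm_sub_rev]
  rw [← hpre]
  exact ((Measure.measurePreserving_sub_left volume x).integrableOn_comp_preimage
    (Homeomorph.subLeft x).measurableEmbedding).2 (integrableOn_inv_norm_ball a)

theorem setIntegral_inv_norm_sub_ball (x : E2) {a : ℝ} (ha : 0 ≤ a) :
    ∫ w in ball x a, ‖x - w‖⁻¹ = 2 * π * a := by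
  have hpre : (fun w => x - w) ⁻¹' ball 0 a = ball x a := by
    ext; simp [dist_eq_norm, norm_sub_rev]
  rw [← hpre, (Measure.measurePreserving_sub_left volume x).setIntegral_preimage_emb
    (Homeomorph.subLeft x).measurableEmbedding (fun w => ‖w‖⁻¹), setIntegral_inv_norm_ball ha]

variable {f : E2 → ℝ} {x : E2} {a B : ℝ}

theorem integrable_mul_inv_norm_sub (hf : Integrable f) (ha : 0 < a)
    (hB : ∀ z ∈ ball x a, |f z| ≤ B) : Integrable fun z => f z * ‖x - z‖⁻¹ := by
  have hk : AEStronglyMeasurable (fun z => ‖x - z‖⁻¹) volume :=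
    Measurable.aestronglyMeasurable (by fun_prop)
  rw [← integrableOn_univ, ← Set.union_compl_self (ball x a)]
  refine IntegrableOn.union ?_ ?_
  · refine (integrableOn_inv_norm_sub_ball x a).bdd_mul (c := B) hf.1.restrict ?_
    exact (ae_restrict_mem measurableSet_ball).mono hB
  · refine hf.integrableOn.mul_bdd (c := a⁻¹) hk.restrict ?_
    filter_upwards [ae_restrict_mem measurableSet_ball.compl] with z hz
    have : a ≤ ‖x - z‖ := by simpa [dist_eq_norm, norm_sub_rev] using hz
    rw [norm_inv, norm_norm]
    gcongr

theorem integral_mul_inv_norm_sub_le (hf : Integrable f) (hf0 : ∀ z, 0 ≤ f z) (ha : 0 < a)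
    (hB : ∀ z ∈ ball x a, f z ≤ B) :
    ∫ z, f z * ‖x - z‖⁻¹ ≤ 2 * π * a * B + (∫ z in (ball x a)ᶜ, f z) / a := by
  have hint : Integrable fun z => f z * ‖x - z‖⁻¹ := integrable_mul_inv_norm_sub hf ha
    fun z hz => (abs_of_nonneg (hf0 z)).trans_le (hB z hz)
  have near : ∫ z in ball x a, f z * ‖x - z‖⁻¹ ≤ 2 * π * a * B := by
    rw [← setIntegral_inv_norm_sub_ball x ha.le, mul_comm, ← integral_const_mul]
    refine setIntegral_mono_on hint.integrableOn
      ((integrableOn_inv_norm_sub_ball x a).const_mul B) measurableSet_ball fun z hz => ?_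
    gcongr
    exact hB z hz
  have far : ∫ z in (ball x a)ᶜ, f z * ‖x - z‖⁻¹ ≤ (∫ z in (ball x a)ᶜ, f z) / a := by
    rw [div_eq_mul_inv, ← integral_mul_const]
    refine setIntegral_mono_on hint.integrableOn (hf.integrableOn.mul_const _)
      measurableSet_ball.compl fun z hz => ?_
    have : a ≤ ‖x - z‖ := by simpa [dist_eq_norm, norm_sub_rev] using hz
    have := hf0 z
    gcongr
  rw [← integral_add_compl measurableSet_ball hint]
  exact add_le_add near far

theorem abs_mul_gradLog_sub_le (f : E2 → ℝ) (j : Fin 2) (x z : E2) :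
    |f z * gradLog j (x - z)| ≤ |f z| * ‖x - z‖⁻¹ := by
  rw [abs_mul]
  gcongr
  exact abs_gradLog_le j _

theorem abs_setIntegral_compl_ball_mul_gradLog_sub_le (hf : Integrable f) (hf0 : ∀ z, 0 ≤ f z)
    (ha : 0 < a) (j : Fin 2) :
    |∫ z in (ball x a)ᶜ, f z * gradLog j (x - z)| ≤ (∫ z in (ball x a)ᶜ, f z) / a := by
  rw [div_eq_mul_inv, ← integral_mul_const]
  refine norm_integral_le_of_norm_le (f := fun z => f z * gradLog j (x - z))
    (hf.integrableOn.mul_const _) ?_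
  filter_upwards [ae_restrict_mem measurableSet_ball.compl] with z hz
  have hz' : a ≤ ‖x - z‖ := by simpa [dist_eq_norm, norm_sub_rev] using hz
  refine (abs_mul_gradLog_sub_le f j x z).trans ?_
  rw [abs_of_nonneg (hf0 z)]
  have := hf0 z
  gcongr

theorem integrable_mul_gradLog_sub (hf : Integrable f) (ha : 0 < a)
    (hB : ∀ z ∈ ball x a, |f z| ≤ B) (j : Fin 2) :
    Integrable fun z => f z * gradLog j (x - z) := by
  refine (integrable_mul_inv_norm_sub hf.abs ha (B := B) (by simpa using hB)).mono' ?_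
    (.of_forall (abs_mul_gradLog_sub_le f j x))
  exact hf.1.mul ((measurable_gradLog j).comp (by fun_prop)).aestronglyMeasurable

theorem integrable_mul_gradLog_sub_of_hasCompactSupport (hf : Continuous f)
    (hs : HasCompactSupport f) (x : E2) (j : Fin 2) :
    Integrable fun z => f z * gradLog j (x - z) := by
  obtain ⟨C, hC⟩ := hs.exists_bound_of_continuous hf
  exact integrable_mul_gradLog_sub (hf.integrable_of_hasCompactSupport hs) one_pos
    (fun z _ => hC z) j

end Kernel

section Polar

/-- The point of the plane with polar coordinates `(ρ, t)`. -/
noncomputable def polar (ρ t : ℝ) : E2 := !₂[ρ * Real.cos t, ρ * Real.sin t]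

theorem polar_eq_smul (ρ t : ℝ) : polar ρ t = ρ • polar 1 t := by
  ext i; fin_cases i <;> simp [polar]

theorem norm_polar_one (t : ℝ) : ‖polar 1 t‖ = 1 := by
  have : ‖polar 1 t‖ ^ 2 = 1 := by simp [norm_sq_eq_add, polar]
  exact (pow_eq_one_iff_of_nonneg (norm_nonneg _) two_ne_zero).1 this

theorem norm_polar {ρ : ℝ} (hρ : 0 ≤ ρ) (t : ℝ) : ‖polar ρ t‖ = ρ := by
  rw [polar_eq_smul, norm_smul, norm_polar_one, mul_one, Real.norm_of_nonneg hρ]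

theorem polar_eq_add (ρ t : ℝ) : polar ρ t = (ρ * Real.cos t) • EuclideanSpace.single 0 (1 : ℝ) +
    (ρ * Real.sin t) • EuclideanSpace.single 1 (1 : ℝ) := by
  ext i; fin_cases i <;> simp [polar]

theorem contDiff_polar {n : WithTop ℕ∞} : ContDiff ℝ n fun p : ℝ × ℝ => polar p.1 p.2 := by
  simp only [polar_eq_add]
  exact ((contDiff_fst.mul (Real.contDiff_cos.comp contDiff_snd)).smul contDiff_const).add
    ((contDiff_fst.mul (Real.contDiff_sin.comp contDiff_snd)).smul contDiff_const)

@[fun_prop] theorem continuous_polar : Continuous fun p : ℝ × ℝ => polar p.1 p.2 :=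
  (contDiff_polar (n := 0)).continuous

theorem integral_eq_sq_mul_integral_comp_smul (F : E2 → ℝ) {κ : ℝ} (hκ : 0 < κ) :
    ∫ y, F y = κ ^ 2 * ∫ z, F (κ • z) := by
  rw [Measure.integral_comp_smul, finrank_euclideanSpace_fin, abs_of_pos (by positivity),
    smul_eq_mul, mul_inv_cancel_left₀ (by positivity)]

theorem integral_eq_polar (F : E2 → ℝ) :
    ∫ w, F w = ∫ p in Set.Ioi (0 : ℝ) ×ˢ Set.Ioo (-π) π, p.1 * F (polar p.1 p.2) := by
  let e : ℝ × ℝ ≃ᵐ E2 := MeasurableEquiv.finTwoArrow.symm.trans (MeasurableEquiv.toLp 2 (Fin 2 → ℝ))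
  have he : MeasurePreserving e :=
    (PiLp.volume_preserving_toLp (Fin 2)).comp (volume_preserving_finTwoArrow ℝ).symm
  rw [← he.integral_comp' F, ← integral_comp_polarCoord_symm]
  rfl

variable {f g ψ : E2 → ℝ}

theorem hasDerivAt_comp_polar_radius {ρ t : ℝ} (hψ : DifferentiableAt ℝ ψ (polar ρ t)) :
    HasDerivAt (fun s => ψ (polar s t))
      (Real.cos t * pd 0 ψ (polar ρ t) + Real.sin t * pd 1 ψ (polar ρ t)) ρ := by
  have h : HasDerivAt (fun s => polar s t) (polar 1 t) ρ := by
    rw [funext fun s => polar_eq_smul s t]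
    simpa only [id, one_smul] using (hasDerivAt_id ρ).smul_const (polar 1 t)
  refine (hψ.hasFDerivAt.comp_hasDerivAt ρ h).congr_deriv ?_
  simp [fderiv_apply_eq_pd, polar]

theorem hasDerivAt_comp_polar_angle {ρ t : ℝ} (hψ : DifferentiableAt ℝ ψ (polar ρ t)) :
    HasDerivAt (fun s => ψ (polar ρ s))
      (ρ * (Real.cos t * pd 1 ψ (polar ρ t) - Real.sin t * pd 0 ψ (polar ρ t))) t := by
  have h : HasDerivAt (fun s => polar ρ s) !₂[-(ρ * Real.sin t), ρ * Real.cos t] t := by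
    simp only [polar_eq_add]
    refine ((((Real.hasDerivAt_cos t).const_mul ρ).smul_const _).add
      (((Real.hasDerivAt_sin t).const_mul ρ).smul_const _)).congr_deriv ?_
    ext i; fin_cases i <;> simp
  refine (hψ.hasFDerivAt.comp_hasDerivAt t h).congr_deriv ?_
  simp only [fderiv_apply_eq_pd, Matrix.cons_val_zero, neg_mul, Matrix.cons_val_one]
  ring

theorem integrableOn_polar {G : ℝ × ℝ → ℝ} (hG : Continuous G) {R : ℝ}
    (hR : ∀ p : ℝ × ℝ, R < p.1 → G p = 0) :
    IntegrableOn G (Set.Ioi (0 : ℝ) ×ˢ Set.Ioo (-π) π) := by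
  refine (hG.continuousOn.integrableOn_compact (K := Set.Icc 0 R ×ˢ Set.Icc (-π) π)
    (isCompact_Icc.prod isCompact_Icc)).of_forall_sdiff_eq_zero
    (measurableSet_Ioi.prod measurableSet_Ioo) ?_
  rintro ⟨ρ, t⟩ ⟨⟨hρ, ht⟩, hp⟩
  exact hR _ (not_le.1 fun h => hp ⟨⟨le_of_lt hρ, h⟩, Set.Ioo_subset_Icc_self ht⟩)

theorem integrableOn_gradLog_polar (hf : Continuous f) (hfs : HasCompactSupport f)
    (hg : Continuous g) (hgs : HasCompactSupport g) :
    IntegrableOn (fun p : ℝ × ℝ =>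
      Real.cos p.2 * f (polar p.1 p.2) + Real.sin p.2 * g (polar p.1 p.2))
      (Set.Ioi (0 : ℝ) ×ˢ Set.Ioo (-π) π) := by
  obtain ⟨R, hR, hfR⟩ := hfs.exists_pos_le_norm
  obtain ⟨S, -, hgS⟩ := hgs.exists_pos_le_norm
  refine integrableOn_polar (R := max R S) (by fun_prop) fun ⟨ρ, t⟩ hρ => ?_
  have hn : ‖polar ρ t‖ = ρ := norm_polar ((hR.le.trans (le_max_left R S)).trans hρ.le) t
  have hRρ := (le_max_left R S).trans hρ.le
  have hSρ := (le_max_right R S).trans hρ.le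
  simp [hfR _ (hRρ.trans_eq hn.symm), hgS _ (hSρ.trans_eq hn.symm)]

-- The Jacobian `ρ` of polar coordinates cancels the singularity of the kernel.
theorem integral_gradLog_eq_polar (f g : E2 → ℝ) :
    ∫ w, (gradLog 0 w * f w + gradLog 1 w * g w) =
      ∫ p in Set.Ioi (0 : ℝ) ×ˢ Set.Ioo (-π) π,
        (Real.cos p.2 * f (polar p.1 p.2) + Real.sin p.2 * g (polar p.1 p.2)) := by
  rw [integral_eq_polar]
  refine setIntegral_congr_fun (measurableSet_Ioi.prod measurableSet_Ioo) ?_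
  rintro ⟨ρ, t⟩ ⟨hρ : 0 < ρ, -⟩
  have h0 : ρ * gradLog 0 (polar ρ t) = Real.cos t := by
    rw [gradLog, norm_polar hρ.le]
    simp only [polar, Matrix.cons_val_zero]
    field_simp
  have h1 : ρ * gradLog 1 (polar ρ t) = Real.sin t := by
    rw [gradLog, norm_polar hρ.le]
    simp only [polar, Matrix.cons_val_one, Matrix.cons_val_fin_one]
    field_simp
  simp only [← h0, ← h1]; ring

theorem integral_gradLog_radial (hψ : ContDiff ℝ 1 ψ) (hs : HasCompactSupport ψ) :
    ∫ w, (gradLog 0 w * pd 0 ψ w + gradLog 1 w * pd 1 ψ w) = -(2 * π * ψ 0) := by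
  have hray (t : ℝ) : ∫ ρ in Set.Ioi (0 : ℝ),
      (Real.cos t * pd 0 ψ (polar ρ t) + Real.sin t * pd 1 ψ (polar ρ t)) = -ψ 0 := by
    have hd : deriv (fun ρ => ψ (polar ρ t)) = fun ρ =>
        Real.cos t * pd 0 ψ (polar ρ t) + Real.sin t * pd 1 ψ (polar ρ t) := by
      ext ρ
      exact (hasDerivAt_comp_polar_radius (hψ.differentiable one_ne_zero _)).deriv
    have hcs : HasCompactSupport fun ρ => ψ (polar ρ t) := by
      rw [funext fun ρ => congrArg ψ (polar_eq_smul ρ t)]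
      exact hs.comp_isClosedEmbedding (isClosedEmbedding_smul_left
        (norm_ne_zero_iff.1 ((norm_polar_one t).trans_ne one_ne_zero)))
    have hcd : ContDiff ℝ 1 fun ρ => ψ (polar ρ t) :=
      hψ.comp (contDiff_polar.comp (contDiff_id.prodMk contDiff_const))
    rw [← hd, hcs.integral_Ioi_deriv_eq hcd, polar_eq_smul, zero_smul]
  have hint := integrableOn_gradLog_polar (continuous_pd hψ 0) (hasCompactSupport_pd hs 0)
    (continuous_pd hψ 1) (hasCompactSupport_pd hs 1)
  rw [IntegrableOn, Measure.volume_eq_prod, ← Measure.prod_restrict] at hint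
  rw [integral_gradLog_eq_polar, Measure.volume_eq_prod, ← Measure.prod_restrict,
    integral_prod_symm _ hint]
  simp only [hray, integral_const, measureReal_restrict_apply_univ, smul_eq_mul]
  rw [Real.volume_real_Ioo_of_le (by linarith [Real.pi_pos])]
  ring

theorem integral_gradLog_angular (hψ : ContDiff ℝ 1 ψ) (hs : HasCompactSupport ψ) :
    ∫ w, (gradLog 0 w * pd 1 ψ w - gradLog 1 w * pd 0 ψ w) = 0 := by
  have hcont := continuous_pd hψ
  have hcirc {ρ : ℝ} (hρ : 0 < ρ) : ∫ t in Set.Ioo (-π) π,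
      (Real.cos t * pd 1 ψ (polar ρ t) + Real.sin t * -pd 0 ψ (polar ρ t)) = 0 := by
    have h := intervalIntegral.integral_eq_sub_of_hasDerivAt (a := -π) (b := π)
      (fun t _ => hasDerivAt_comp_polar_angle (ρ := ρ) (hψ.differentiable one_ne_zero (polar ρ t)))
      (Continuous.intervalIntegrable (by fun_prop (disch := assumption)) _ _)
    rw [intervalIntegral.integral_const_mul, show polar ρ π = polar ρ (-π) by simp [polar],
      sub_self, mul_eq_zero, or_iff_right hρ.ne',
      intervalIntegral.integral_of_le (by linarith [Real.pi_pos]),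
      integral_Ioc_eq_integral_Ioo] at h
    simpa only [mul_neg, ← sub_eq_add_neg] using h
  have hint := integrableOn_gradLog_polar (hcont 1) (hasCompactSupport_pd hs 1)
    (g := fun w => -pd 0 ψ w) (hcont 0).neg (hasCompactSupport_pd hs 0).neg
  rw [Measure.volume_eq_prod] at hint
  simp_rw [sub_eq_add_neg, ← mul_neg]
  rw [integral_gradLog_eq_polar (pd 1 ψ) (fun w => -pd 0 ψ w), Measure.volume_eq_prod,
    setIntegral_prod _ hint, setIntegral_congr_fun measurableSet_Ioi fun ρ hρ => hcirc hρ,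
    integral_zero]

-- `Δψ` times the kernel is a radial plus an angular derivative of `∇ψ`, and only the radial
-- derivative contributes.
theorem integral_gradLog_mul_lapl (hψ : ContDiff ℝ 2 ψ) (hs : HasCompactSupport ψ) (j : Fin 2) :
    ∫ w, gradLog j w * lapl ψ w = -(2 * π * pd j ψ 0) := by
  have radial (a : Fin 2) := integral_gradLog_radial (contDiff_pd hψ a) (hasCompactSupport_pd hs a)
  have angular (a : Fin 2) :=
    integral_gradLog_angular (contDiff_pd hψ a) (hasCompactSupport_pd hs a)
  have hint (k a b : Fin 2) : Integrable fun w => gradLog k w * pd a (pd b ψ) w := by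
    have h := integrable_mul_gradLog_sub_of_hasCompactSupport (continuous_pd (contDiff_pd hψ b) a)
      (hasCompactSupport_pd (hasCompactSupport_pd hs b) a) 0 k
    exact h.neg.congr (.of_forall fun w => by simp [gradLog_neg, mul_comm])
  have comm (w : E2) := pd_comm (hψ.contDiffAt (x := w)) 0 1
  match j with
  | 0 =>
    have h := integral_add ((hint 0 0 0).add (hint 1 1 0)) ((hint 0 1 1).sub (hint 1 0 1))
    simp only [Pi.add_apply, Pi.sub_apply, radial, angular, add_zero] at h
    rw [← h]
    congr 1 with w
    rw [lapl, comm]; ring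
  | 1 =>
    have h := integral_sub ((hint 0 0 1).add (hint 1 1 1)) ((hint 0 1 0).sub (hint 1 0 0))
    simp only [Pi.add_apply, Pi.sub_apply, radial, angular, sub_zero] at h
    rw [← h]
    congr 1 with w
    rw [lapl, comm]; ring

theorem integral_lapl_mul_gradLog_sub (hψ : ContDiff ℝ 2 ψ) (hs : HasCompactSupport ψ) (y : E2)
    (j : Fin 2) : ∫ ζ, lapl ψ ζ * gradLog j (y - ζ) = 2 * π * pd j ψ y := by
  have hψy : ContDiff ℝ 2 fun w => ψ (y + (1 : ℝ) • w) := by fun_prop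
  have hsy : HasCompactSupport fun w => ψ (y + (1 : ℝ) • w) := by
    simp only [one_smul]
    exact hs.comp_homeomorph (Homeomorph.addLeft y)
  have h : ∫ w, gradLog j w * lapl ψ (y + w) = -(2 * π * pd j ψ y) := by
    have := integral_gradLog_mul_lapl hψy hsy j
    simp_rw [lapl_comp_add_smul, pd_comp_add_smul] at this
    simpa using this
  rw [← neg_eq_iff_eq_neg.2 h, ← integral_add_left_eq_self _ y, ← integral_neg]
  congr 1 with w
  rw [sub_add_cancel_left, gradLog_neg]; ring

end Polar

section Localization

variable {χ k U f : E2 → ℝ} {x y : E2}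

theorem integral_pd_eq_zero {g : E2 → ℝ} (hg : ContDiff ℝ 1 g) (hs : HasCompactSupport g)
    (j : Fin 2) : ∫ x, pd j g x = 0 := by
  have hpd : Integrable (pd j g) :=
    (continuous_pd hg j).integrable_of_hasCompactSupport (hasCompactSupport_pd hs j)
  have h := integral_mul_fderiv_eq_neg_fderiv_mul_of_integrable (μ := volume)
    (f := fun _ : E2 => (1 : ℝ)) (g := g) (v := EuclideanSpace.single j 1) (by simp)
    (by simpa using! hpd) (by simpa using hg.continuous.integrable_of_hasCompactSupport hs)
    (fun _ _ => differentiableAt_const _) (fun z _ => hg.differentiable one_ne_zero z)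
  simpa [pd] using h

theorem pd_eq_zero_of_notMem_tsupport (h : x ∉ tsupport (fderiv ℝ f)) (j : Fin 2) :
    pd j f x = 0 := by
  simp [pd, image_eq_zero_of_notMem_tsupport h]

theorem lapl_eq_zero_of_notMem_tsupport (h : x ∉ tsupport (fderiv ℝ f)) : lapl f x = 0 := by
  have hev (j : Fin 2) : pd j f =ᶠ[𝓝 x] fun _ => 0 := by
    filter_upwards [(isClosed_tsupport (fderiv ℝ f)).isOpen_compl.mem_nhds h] with z hz
    exact pd_eq_zero_of_notMem_tsupport hz j
  rw [lapl, pd_congr (hev 0), pd_congr (hev 1), pd_const, pd_const, add_zero]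

theorem integral_grad_mul_grad_add_lapl_mul (hχ : ContDiff ℝ 2 χ) (hs : HasCompactSupport χ)
    (hk : ContDiff ℝ 1 k) (hU : ContDiff ℝ 1 U) :
    ∫ ζ, (2 * (pd 0 χ ζ * pd 0 U ζ + pd 1 χ ζ * pd 1 U ζ) + lapl χ ζ * U ζ) * k ζ =
      -∫ ζ, U ζ * (lapl χ ζ * k ζ + 2 * (pd 0 χ ζ * pd 0 k ζ + pd 1 χ ζ * pd 1 k ζ)) := by
  have hF (l : Fin 2) : ContDiff ℝ 1 fun ζ => pd l χ ζ * (k ζ * U ζ) :=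
    (contDiff_pd hχ l).mul (hk.mul hU)
  have hFs (l : Fin 2) : HasCompactSupport fun ζ => pd l χ ζ * (k ζ * U ζ) :=
    (hasCompactSupport_pd hs l).mul_right
  have hdiv (l : Fin 2) (ζ : E2) : pd l (fun ζ => pd l χ ζ * (k ζ * U ζ)) ζ =
      pd l (pd l χ) ζ * (k ζ * U ζ) + pd l χ ζ * (pd l k ζ * U ζ + k ζ * pd l U ζ) := by
    have hkd := hk.differentiable one_ne_zero ζ
    have hUd := hU.differentiable one_ne_zero ζ
    rw [pd_mul ((contDiff_pd hχ l).differentiable one_ne_zero ζ) (hkd.fun_mul hUd), pd_mul hkd hUd]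
  have hint (l : Fin 2) : Integrable (pd l fun ζ => pd l χ ζ * (k ζ * U ζ)) :=
    (continuous_pd (hF l) l).integrable_of_hasCompactSupport (hasCompactSupport_pd (hFs l) l)
  have hc (l : Fin 2) : Continuous (pd l χ) := (contDiff_pd hχ l).continuous
  have hleft : Integrable fun ζ =>
      U ζ * (lapl χ ζ * k ζ + 2 * (pd 0 χ ζ * pd 0 k ζ + pd 1 χ ζ * pd 1 k ζ)) := by
    have hcont := continuous_lapl hχ
    have hkc := continuous_pd hk
    refine Continuous.integrable_of_hasCompactSupport
      (by fun_prop (disch := assumption)) (HasCompactSupport.mul_left ?_)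
    refine (hasCompactSupport_lapl hs).mul_right.add (HasCompactSupport.mul_left ?_)
    exact (hasCompactSupport_pd hs 0).mul_right.add (hasCompactSupport_pd hs 1).mul_right
  have hzero : ∫ ζ, (2 * pd 0 (fun ζ => pd 0 χ ζ * (k ζ * U ζ)) ζ +
      2 * pd 1 (fun ζ => pd 1 χ ζ * (k ζ * U ζ)) ζ) = 0 := by
    rw [integral_add ((hint 0).const_mul 2) ((hint 1).const_mul 2), integral_const_mul,
      integral_const_mul, integral_pd_eq_zero (hF 0) (hFs 0), integral_pd_eq_zero (hF 1) (hFs 1),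
      mul_zero, add_zero]
  have hdivint : Integrable fun ζ => 2 * pd 0 (fun ζ => pd 0 χ ζ * (k ζ * U ζ)) ζ +
      2 * pd 1 (fun ζ => pd 1 χ ζ * (k ζ * U ζ)) ζ :=
    ((hint 0).const_mul 2).add ((hint 1).const_mul 2)
  rw [← zero_sub, ← hzero, ← integral_sub hdivint hleft]
  congr 1 with ζ
  rw [hdiv, hdiv, lapl]; ring

theorem two_pi_mul_pd_mul_eq (hχ : ContDiff ℝ 2 χ) (hs : HasCompactSupport χ)
    (hU : ContDiff ℝ 2 U) (hk : ContDiff ℝ 1 k) (j : Fin 2)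
    (hkeq : ∀ ζ ∈ tsupport (fderiv ℝ χ), gradLog j (y - ζ) = k ζ) :
    2 * π * pd j (fun ζ => χ ζ * U ζ) y = (∫ ζ, χ ζ * lapl U ζ * gradLog j (y - ζ)) -
      ∫ ζ, U ζ * (lapl χ ζ * k ζ + 2 * (pd 0 χ ζ * pd 0 k ζ + pd 1 χ ζ * pd 1 k ζ)) := by
  have hU1 : ContDiff ℝ 1 U := hU.of_le one_le_two
  have hlapl (ζ : E2) : lapl (fun ζ => χ ζ * U ζ) ζ * gradLog j (y - ζ) =
      χ ζ * lapl U ζ * gradLog j (y - ζ) +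
        (2 * (pd 0 χ ζ * pd 0 U ζ + pd 1 χ ζ * pd 1 U ζ) + lapl χ ζ * U ζ) * k ζ := by
    rw [lapl_mul hχ.contDiffAt hU.contDiffAt]
    by_cases hζ : ζ ∈ tsupport (fderiv ℝ χ)
    · rw [hkeq ζ hζ]; ring
    · simp [pd_eq_zero_of_notMem_tsupport hζ, lapl_eq_zero_of_notMem_tsupport hζ]
  have hint : Integrable fun ζ =>
      (2 * (pd 0 χ ζ * pd 0 U ζ + pd 1 χ ζ * pd 1 U ζ) + lapl χ ζ * U ζ) * k ζ := by
    have hcont := continuous_lapl hχ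
    have hχc := fun l => (contDiff_pd hχ l).continuous
    have hUc := continuous_pd hU1
    refine Continuous.integrable_of_hasCompactSupport
      (by fun_prop (disch := assumption)) (HasCompactSupport.mul_right ?_)
    refine HasCompactSupport.add (HasCompactSupport.mul_left ?_)
      (hasCompactSupport_lapl hs).mul_right
    exact (hasCompactSupport_pd hs 0).mul_right.add (hasCompactSupport_pd hs 1).mul_right
  rw [← integral_lapl_mul_gradLog_sub (hχ.mul hU) hs.mul_right, sub_eq_add_neg,
    ← integral_grad_mul_grad_add_lapl_mul hχ hs hk hU1, ← integral_add _ hint]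
  · simp_rw [hlapl]
  · exact integrable_mul_gradLog_sub_of_hasCompactSupport
      (hχ.continuous.mul (continuous_lapl hU)) hs.mul_right y j

/-- The cut-off function with which the solutions are localized: it is `1` for `‖x‖ ≤ 3/8` and
vanishes for `‖x‖ ≥ 1/2`. -/
noncomputable def cutoff : ContDiffBump (0 : E2) := ⟨3 / 8, 1 / 2, by norm_num, by norm_num⟩

theorem cutoff_eq_one (hx : ‖x‖ ≤ 3 / 8) : cutoff x = 1 :=
  cutoff.one_of_mem_closedBall (by simpa [cutoff] using hx)

theorem cutoff_eq_zero (hx : 1 / 2 ≤ ‖x‖) : cutoff x = 0 :=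
  cutoff.zero_of_le_dist (by simpa [cutoff] using hx)

theorem cutoff_mul_eventuallyEq (hx : ‖x‖ < 3 / 8) (f : E2 → ℝ) :
    (fun z => cutoff z * f z) =ᶠ[𝓝 x] f := by
  filter_upwards [isOpen_ball.mem_nhds (mem_ball_zero_iff.2 hx)] with z hz
  rw [cutoff_eq_one (mem_ball_zero_iff.1 hz).le, one_mul]

theorem tsupport_fderiv_cutoff_subset :
    tsupport (fderiv ℝ cutoff) ⊆ closedBall 0 (1 / 2) \ ball 0 (3 / 8) := by
  refine closure_minimal (fun x hx => ⟨?_, fun hlt => hx ?_⟩)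
    (isClosed_closedBall.sdiff isOpen_ball)
  · refine closure_minimal (fun z hz => ?_) isClosed_closedBall
      (support_fderiv_subset ℝ hx)
    rw [mem_closedBall_zero_iff]
    exact le_of_lt (not_le.1 fun h => hz (cutoff_eq_zero h))
  · have : (cutoff : E2 → ℝ) =ᶠ[𝓝 x] fun _ => 1 := by
      filter_upwards [isOpen_ball.mem_nhds hlt] with z hz
      exact cutoff_eq_one (mem_ball_zero_iff.1 hz).le
    rw [this.fderiv_eq, fderiv_fun_const, Pi.zero_apply]

/-- A smooth function agreeing with `gradLog j` outside a small ball around its singularity. It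
replaces `gradLog j` on the set where the cutoff varies, which stays away from the singularity. -/
noncomputable def truncGradLog (j : Fin 2) (w : E2) : ℝ :=
  (1 - (⟨1 / 64, 1 / 32, by norm_num, by norm_num⟩ : ContDiffBump (0 : E2)) w) * gradLog j w

theorem truncGradLog_eq {w : E2} (hw : 1 / 32 ≤ ‖w‖) (j : Fin 2) :
    truncGradLog j w = gradLog j w := by
  rw [truncGradLog, ContDiffBump.zero_of_le_dist _ (by simpa using hw), sub_zero, one_mul]

theorem contDiff_truncGradLog (j : Fin 2) : ContDiff ℝ 1 (truncGradLog j) := by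
  refine contDiff_iff_contDiffAt.2 fun w => ?_
  rcases eq_or_ne w 0 with rfl | hw
  · have : truncGradLog j =ᶠ[𝓝 0] fun _ => (0 : ℝ) := by
      filter_upwards [isOpen_ball.mem_nhds (mem_ball_self (x := (0 : E2))
        (by norm_num : (0 : ℝ) < 1 / 64))] with z hz
      rw [truncGradLog, ContDiffBump.one_of_mem_closedBall _ (ball_subset_closedBall hz), sub_self,
        zero_mul]
    exact contDiffAt_const.congr_of_eventuallyEq this
  · refine (contDiffAt_const.sub (ContDiffBump.contDiffAt _)).mul (ContDiffAt.div ?_ ?_ ?_)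
    · fun_prop
    · exact contDiffAt_id.norm_sq ℝ
    · simpa using hw

/-- The kernel of the error committed when `∂ⱼU` is replaced by the Newtonian potential of
`cutoff * ΔU`. -/
noncomputable def errorKernel (j : Fin 2) (y ζ : E2) : ℝ :=
  lapl cutoff ζ * truncGradLog j (y - ζ) -
    2 * (pd 0 cutoff ζ * pd 0 (truncGradLog j) (y - ζ) +
      pd 1 cutoff ζ * pd 1 (truncGradLog j) (y - ζ))

theorem errorKernel_eq_zero {ζ : E2} (hζ : ζ ∉ closedBall 0 (1 / 2) \ ball 0 (3 / 8)) (j : Fin 2)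
    (y : E2) : errorKernel j y ζ = 0 := by
  have h : ζ ∉ tsupport (fderiv ℝ cutoff) := fun h => hζ (tsupport_fderiv_cutoff_subset h)
  simp [errorKernel, pd_eq_zero_of_notMem_tsupport h, lapl_eq_zero_of_notMem_tsupport h]

theorem exists_abs_errorKernel_le :
    ∃ C, 0 ≤ C ∧ ∀ (j : Fin 2) (y ζ : E2), ‖y‖ ≤ 5 / 16 → |errorKernel j y ζ| ≤ C := by
  have hcont (j : Fin 2) : Continuous fun p : E2 × E2 => errorKernel j p.1 p.2 := by
    have h₁ := continuous_lapl (cutoff.contDiff (n := 2))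
    have h₂ := continuous_pd (cutoff.contDiff (n := 1))
    have h₃ := (contDiff_truncGradLog j).continuous
    have h₄ := continuous_pd (contDiff_truncGradLog j)
    unfold errorKernel
    fun_prop (disch := assumption)
  choose C hC using fun j => ((isCompact_closedBall (0 : E2) (5 / 16)).prod
    (isCompact_closedBall (0 : E2) (1 / 2))).exists_bound_of_continuousOn (hcont j).continuousOn
  refine ⟨max 0 (max (C 0) (C 1)), le_max_left _ _, fun j y ζ hy => ?_⟩
  by_cases hζ : ζ ∈ closedBall (0 : E2) (1 / 2) \ ball 0 (3 / 8)
  · refine (hC j (y, ζ) ⟨mem_closedBall_zero_iff.2 hy, hζ.1⟩).trans ?_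
    fin_cases j <;> simp
  · simp [errorKernel_eq_zero hζ]

theorem two_pi_mul_pd_eq (hU : ContDiff ℝ 2 U) (hy : ‖y‖ ≤ 5 / 16) (j : Fin 2) :
    2 * π * pd j U y = (∫ ζ, cutoff ζ * lapl U ζ * gradLog j (y - ζ)) -
      ∫ ζ, U ζ * errorKernel j y ζ := by
  have hk : ContDiff ℝ 1 fun ζ => truncGradLog j (y - ζ) :=
    (contDiff_truncGradLog j).comp (contDiff_const.sub contDiff_id)
  have hkeq : ∀ ζ ∈ tsupport (fderiv ℝ cutoff), gradLog j (y - ζ) = truncGradLog j (y - ζ) := by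
    intro ζ hζ
    have h₁ : 3 / 8 ≤ ‖ζ‖ := by simpa using (tsupport_fderiv_cutoff_subset hζ).2
    have h₂ := norm_sub_norm_le ζ y
    rw [norm_sub_rev] at h₂
    exact (truncGradLog_eq (by linarith) j).symm
  have h := two_pi_mul_pd_mul_eq cutoff.contDiff cutoff.hasCompactSupport hU hk j hkeq
  rw [pd_congr (cutoff_mul_eventuallyEq (by linarith) U)] at h
  rw [h]
  congr 2 with ζ
  rw [pd_comp_sub_left, pd_comp_sub_left, errorKernel]
  ring

end Localization

section CircleMean

/-- The mean value of `f` over the circle of radius `ρ` centred at the origin. -/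
noncomputable def circleMean (f : E2 → ℝ) (ρ : ℝ) : ℝ :=
  (2 * π)⁻¹ * ∫ t in -π..π, f (polar ρ t)

/-- The Euler vector field `ρ ∂/∂ρ` applied to `f`. -/
noncomputable def eulerDeriv (f : E2 → ℝ) (x : E2) : ℝ := x 0 * pd 0 f x + x 1 * pd 1 f x

/-- The rotation field `∂/∂t` (derivative in the polar angle) applied to `f`. -/
noncomputable def angularDeriv (f : E2 → ℝ) (x : E2) : ℝ := x 0 * pd 1 f x - x 1 * pd 0 f x

variable {f : E2 → ℝ} {x : E2} {a b M R ρ : ℝ}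

theorem circleMean_le (hf : Continuous f) (hρ : 0 ≤ ρ) (h : ∀ x, ‖x‖ = ρ → f x ≤ M) :
    circleMean f ρ ≤ M := by
  have key : ∫ t in -π..π, f (polar ρ t) ≤ ∫ _ in -π..π, M :=
    intervalIntegral.integral_mono_on (by linarith [Real.pi_pos])
      (Continuous.intervalIntegrable (by fun_prop) _ _) (by simp)
      fun t _ => h _ (norm_polar hρ t)
  rw [intervalIntegral.integral_const, smul_eq_mul] at key
  rw [circleMean, inv_mul_le_iff₀ Real.two_pi_pos]
  linarith

theorem hasDerivAt_circleMean (hf : ContDiff ℝ 1 f) (ρ : ℝ) :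
    HasDerivAt (circleMean f) ((2 * π)⁻¹ * ∫ t in -π..π,
      (Real.cos t * pd 0 f (polar ρ t) + Real.sin t * pd 1 f (polar ρ t))) ρ := by
  have hc := continuous_pd hf
  have hD : Continuous fun p : ℝ × ℝ =>
      Real.cos p.2 * pd 0 f (polar p.1 p.2) + Real.sin p.2 * pd 1 f (polar p.1 p.2) := by
    fun_prop (disch := assumption)
  obtain ⟨C, hC⟩ := ((isCompact_closedBall ρ 1).prod
    (isCompact_uIcc (a := -π) (b := π))).exists_bound_of_continuousOn hD.continuousOn
  refine (intervalIntegral.hasDerivAt_integral_of_dominated_loc_of_deriv_le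
    (F := fun s t => f (polar s t)) (F' := fun s t =>
      Real.cos t * pd 0 f (polar s t) + Real.sin t * pd 1 f (polar s t))
    (bound := fun _ => C) (ball_mem_nhds ρ one_pos) ?_ ?_ ?_ ?_ ?_ ?_).2.const_mul _
  · exact .of_forall fun s => Continuous.aestronglyMeasurable (by fun_prop)
  · exact Continuous.intervalIntegrable (by fun_prop) _ _
  · exact Continuous.aestronglyMeasurable (by fun_prop (disch := assumption))
  · exact .of_forall fun t ht s hs =>
      hC (s, t) ⟨ball_subset_closedBall hs, Set.uIoc_subset_uIcc ht⟩
  · exact intervalIntegrable_const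
  · exact .of_forall fun t _ s _ =>
      hasDerivAt_comp_polar_radius (hf.differentiable one_ne_zero (polar s t))

theorem differentiable_circleMean (hf : ContDiff ℝ 1 f) : Differentiable ℝ (circleMean f) :=
  fun ρ => (hasDerivAt_circleMean hf ρ).differentiableAt

theorem mul_deriv_circleMean (hf : ContDiff ℝ 1 f) (ρ : ℝ) :
    ρ * deriv (circleMean f) ρ = circleMean (eulerDeriv f) ρ := by
  rw [(hasDerivAt_circleMean hf ρ).deriv, circleMean, mul_left_comm,
    ← intervalIntegral.integral_const_mul]
  congr 2 with t
  simp only [eulerDeriv, polar, PiLp.toLp_apply, Matrix.cons_val_zero, Matrix.cons_val_one]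
  ring

theorem circleMean_angularDeriv (hf : ContDiff ℝ 1 f) (ρ : ℝ) :
    circleMean (angularDeriv f) ρ = 0 := by
  have hc := continuous_pd hf
  have key := intervalIntegral.integral_eq_sub_of_hasDerivAt (a := -π) (b := π)
    (fun t _ => hasDerivAt_comp_polar_angle (ρ := ρ) (hf.differentiable one_ne_zero (polar ρ t)))
    (Continuous.intervalIntegrable (by fun_prop (disch := assumption)) _ _)
  rw [show polar ρ π = polar ρ (-π) by simp [polar], sub_self] at key
  rw [circleMean, mul_eq_zero, ← key]
  right
  congr 1 with t
  simp only [angularDeriv, polar, PiLp.toLp_apply, Matrix.cons_val_zero, Matrix.cons_val_one]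
  ring

theorem pd_apply (i j : Fin 2) (x : E2) : pd j (fun z : E2 => z i) x = if i = j then 1 else 0 := by
  have h : fderiv ℝ (fun z : E2 => z i) x = EuclideanSpace.proj i :=
    (EuclideanSpace.proj i : E2 →L[ℝ] ℝ).fderiv
  rw [pd, h]
  simp

theorem contDiff_eulerDeriv (hf : ContDiff ℝ 2 f) : ContDiff ℝ 1 (eulerDeriv f) := by
  have := contDiff_pd hf
  unfold eulerDeriv
  fun_prop (disch := assumption)

theorem contDiff_angularDeriv (hf : ContDiff ℝ 2 f) : ContDiff ℝ 1 (angularDeriv f) := by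
  have := contDiff_pd hf
  unfold angularDeriv
  fun_prop (disch := assumption)

theorem eulerDeriv_eulerDeriv_add_angularDeriv_angularDeriv (hf : ContDiff ℝ 2 f) (x : E2) :
    eulerDeriv (eulerDeriv f) x + angularDeriv (angularDeriv f) x = ‖x‖ ^ 2 * lapl f x := by
  have hd (j : Fin 2) : DifferentiableAt ℝ (pd j f) x :=
    (contDiff_pd hf j).differentiable one_ne_zero x
  have hprod (i j l : Fin 2) : pd l (fun z => z i * pd j f z) x =
      (if i = l then 1 else 0) * pd j f x + x i * pd l (pd j f) x := by
    rw [pd_mul (by fun_prop) (hd j), pd_apply]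
  have hdp (i j : Fin 2) : DifferentiableAt ℝ (fun z : E2 => z i * pd j f z) x :=
    DifferentiableAt.fun_mul (by fun_prop) (hd j)
  have heuler (l : Fin 2) : pd l (eulerDeriv f) x = _ := pd_add (hdp 0 0) (hdp 1 1) l
  have hangular (l : Fin 2) : pd l (angularDeriv f) x =
      pd l (fun z => z 0 * pd 1 f z) x - pd l (fun z => z 1 * pd 0 f z) x := by
    change fderiv ℝ (fun z => z 0 * pd 1 f z - z 1 * pd 0 f z) x _ = _
    rw [fderiv_fun_sub (hdp 0 1) (hdp 1 0)]
    rfl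
  rw [eulerDeriv, angularDeriv]
  simp only [heuler, hangular, hprod, norm_sq_eq_add, lapl, pd_comm hf.contDiffAt 1 0]
  simp only [↓reduceIte, one_mul, one_ne_zero, zero_mul, zero_add, zero_ne_one]
  ring

theorem circleMean_eulerDeriv_eulerDeriv (hf : ContDiff ℝ 2 f) (hρ : 0 ≤ ρ) :
    circleMean (eulerDeriv (eulerDeriv f)) ρ = ρ ^ 2 * circleMean (lapl f) ρ := by
  have hc {g : E2 → ℝ} (hg : Continuous g) : IntervalIntegrable (fun t => g (polar ρ t))
      volume (-π) π := Continuous.intervalIntegrable (by fun_prop) _ _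
  have hE : Continuous (eulerDeriv (eulerDeriv f)) := by
    have := continuous_pd (contDiff_eulerDeriv hf)
    unfold eulerDeriv at this ⊢
    fun_prop (disch := assumption)
  have hA : Continuous (angularDeriv (angularDeriv f)) := by
    have := continuous_pd (contDiff_angularDeriv hf)
    unfold angularDeriv at this ⊢
    fun_prop (disch := assumption)
  rw [← add_zero (circleMean _ ρ), ← circleMean_angularDeriv (contDiff_angularDeriv hf) ρ]
  simp only [circleMean]
  rw [← mul_add, ← intervalIntegral.integral_add (hc hE) (hc hA)]
  simp only [eulerDeriv_eulerDeriv_add_angularDeriv_angularDeriv hf, norm_polar hρ]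
  rw [intervalIntegral.integral_const_mul, mul_left_comm]

theorem antitoneOn_circleMean_of_eulerDeriv_nonpos (hf : ContDiff ℝ 1 f)
    (h : ∀ ρ ∈ Set.Ioo 0 R, circleMean (eulerDeriv f) ρ ≤ 0) :
    AntitoneOn (circleMean f) (Set.Icc 0 R) := by
  refine antitoneOn_of_deriv_nonpos (convex_Icc 0 R)
    (differentiable_circleMean hf).continuous.continuousOn
    (differentiable_circleMean hf).differentiableOn fun ρ hρ => ?_
  rw [interior_Icc] at hρ
  exact nonpos_of_mul_nonpos_right ((mul_deriv_circleMean hf ρ).trans_le (h ρ hρ)) hρ.1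

theorem antitoneOn_circleMean (hf : ContDiff ℝ 2 f) (h : ∀ x ∈ ball 0 R, lapl f x ≤ 0) :
    AntitoneOn (circleMean f) (Set.Icc 0 R) := by
  have hE : AntitoneOn (circleMean (eulerDeriv f)) (Set.Icc 0 R) := by
    refine antitoneOn_circleMean_of_eulerDeriv_nonpos (contDiff_eulerDeriv hf) fun ρ hρ => ?_
    rw [circleMean_eulerDeriv_eulerDeriv hf hρ.1.le]
    refine mul_nonpos_of_nonneg_of_nonpos (sq_nonneg ρ)
      (circleMean_le (continuous_lapl hf) hρ.1.le fun x hx => h x ?_)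
    simpa [hx] using hρ.2
  refine antitoneOn_circleMean_of_eulerDeriv_nonpos (hf.of_le one_le_two) fun ρ hρ => ?_
  have h0 : circleMean (eulerDeriv f) 0 = 0 := by
    rw [← mul_deriv_circleMean (hf.of_le one_le_two), zero_mul]
  exact h0 ▸ hE ⟨le_rfl, hρ.1.le.trans hρ.2.le⟩ ⟨hρ.1.le, hρ.2.le⟩ hρ.1.le

theorem setIntegral_annulus_eq (hf : Continuous f) (ha : 0 < a) :
    ∫ x in closedBall 0 b \ ball 0 a, f x =
      2 * π * ∫ ρ in Set.Icc a b, ρ * circleMean f ρ := by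
  have hmem {p : ℝ × ℝ} (hp : 0 < p.1) :
      polar p.1 p.2 ∈ closedBall (0 : E2) b \ ball 0 a ↔ p ∈ Set.Icc a b ×ˢ Set.univ := by
    simp [norm_polar hp.le, and_comm]
  have hint : IntegrableOn (fun p : ℝ × ℝ => p.1 * f (polar p.1 p.2))
      (Set.Icc a b ×ˢ Set.Ioo (-π) π) :=
    ((by fun_prop : Continuous fun p : ℝ × ℝ => p.1 * f (polar p.1 p.2)).continuousOn
      |>.integrableOn_compact (isCompact_Icc.prod isCompact_Icc)).mono_set
      (Set.prod_mono le_rfl Set.Ioo_subset_Icc_self)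
  have hset : Set.Ioi (0 : ℝ) ×ˢ Set.Ioo (-π) π ∩ Set.Icc a b ×ˢ Set.univ =
      Set.Icc a b ×ˢ Set.Ioo (-π) π := by
    have hsub : Set.Icc a b ⊆ Set.Ioi 0 := fun ρ hρ => ha.trans_le hρ.1
    rw [Set.prod_inter_prod, Set.inter_univ, Set.inter_eq_right.2 hsub]
  rw [← integral_indicator (measurableSet_closedBall.diff measurableSet_ball), integral_eq_polar]
  calc ∫ p in Set.Ioi (0 : ℝ) ×ˢ Set.Ioo (-π) π,
        p.1 * (closedBall 0 b \ ball 0 a).indicator f (polar p.1 p.2)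
      = ∫ p in Set.Ioi (0 : ℝ) ×ˢ Set.Ioo (-π) π,
          (Set.Icc a b ×ˢ Set.univ).indicator (fun p => p.1 * f (polar p.1 p.2)) p := by
        refine setIntegral_congr_fun (measurableSet_Ioi.prod measurableSet_Ioo) fun p hp => ?_
        simp only [Set.indicator, hmem hp.1]
        split_ifs <;> simp
    _ = ∫ p in Set.Icc a b ×ˢ Set.Ioo (-π) π, p.1 * f (polar p.1 p.2) := by
        rw [setIntegral_indicator (measurableSet_Icc.prod .univ), hset]
    _ = ∫ ρ in Set.Icc a b, 2 * π * (ρ * circleMean f ρ) := by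
        rw [Measure.volume_eq_prod] at hint ⊢
        rw [setIntegral_prod _ hint]
        congr 1 with ρ
        rw [circleMean, intervalIntegral.integral_of_le (by linarith [Real.pi_pos]),
          integral_Ioc_eq_integral_Ioo, integral_const_mul]
        field_simp
    _ = 2 * π * ∫ ρ in Set.Icc a b, ρ * circleMean f ρ := integral_const_mul _ _

theorem setIntegral_annulus_le (hf : ContDiff ℝ 2 f) (ha : 0 < a) (hab : a ≤ b)
    (h : ∀ x ∈ ball 0 b, lapl f x ≤ 0) (hM : 0 ≤ M) (hfM : ∀ x, ‖x‖ = a → f x ≤ M) :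
    ∫ x in closedBall 0 b \ ball 0 a, f x ≤ 2 * π * (b * (b - a)) * M := by
  have hcont : Continuous fun ρ => ρ * circleMean f ρ :=
    continuous_id.mul (differentiable_circleMean (hf.of_le one_le_two)).continuous
  have hmean : ∀ ρ ∈ Set.Icc a b, ρ * circleMean f ρ ≤ b * M := by
    intro ρ hρ
    have hmono : circleMean f ρ ≤ circleMean f a :=
      antitoneOn_circleMean hf h ⟨ha.le, hab⟩ ⟨ha.le.trans hρ.1, hρ.2⟩ hρ.1
    have hρ0 : 0 ≤ ρ := ha.le.trans hρ.1
    calc ρ * circleMean f ρ ≤ ρ * M := by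
          gcongr; exact hmono.trans (circleMean_le hf.continuous ha.le hfM)
      _ ≤ b * M := by gcongr; exact hρ.2
  calc ∫ x in closedBall 0 b \ ball 0 a, f x
      = 2 * π * ∫ ρ in Set.Icc a b, ρ * circleMean f ρ := setIntegral_annulus_eq hf.continuous ha
    _ ≤ 2 * π * ∫ _ in Set.Icc a b, b * M := by
        gcongr ?_ * ?_
        exact setIntegral_mono_on (hcont.continuousOn.integrableOn_compact isCompact_Icc)
          (integrableOn_const (by simp)) measurableSet_Icc hmean
    _ = 2 * π * (b * (b - a)) * M := by
        rw [setIntegral_const, Real.volume_real_Icc_of_le hab, smul_eq_mul]; ring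

end CircleMean

section LocalRepresentation

variable {U : E2 → ℝ} {a b : ℝ}

theorem exists_abs_two_pi_mul_pd_sub_le_of_contDiff :
    ∃ C, 0 ≤ C ∧ ∀ (U : E2 → ℝ) (M : ℝ), ContDiff ℝ 2 U →
      (∀ x ∈ ball 0 (1 / 2), lapl U x ≤ 0) → (∀ x ∈ closedBall 0 (1 / 2), 0 ≤ U x) →
      0 ≤ M → (∀ x, ‖x‖ = 3 / 8 → U x ≤ M) → ∀ (j : Fin 2) (y : E2), ‖y‖ ≤ 5 / 16 →
        |2 * π * pd j U y - ∫ ζ, cutoff ζ * lapl U ζ * gradLog j (y - ζ)| ≤ C * M := by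
  obtain ⟨C, hC, hE⟩ := exists_abs_errorKernel_le
  refine ⟨C * (2 * π * (1 / 2 * (1 / 2 - 3 / 8))), by positivity,
    fun U M hU hΔ hU0 hM hUM j y hy => ?_⟩
  set S : Set E2 := closedBall 0 (1 / 2) \ ball 0 (3 / 8)
  have hSm : MeasurableSet S := measurableSet_closedBall.diff measurableSet_ball
  have hsub : S ⊆ closedBall 0 (1 / 2) := Set.sdiff_subset
  have hrestrict : ∫ ζ, U ζ * errorKernel j y ζ = ∫ ζ in S, U ζ * errorKernel j y ζ := by
    refine (setIntegral_eq_integral_of_forall_compl_eq_zero fun ζ hζ => ?_).symm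
    rw [errorKernel_eq_zero hζ, mul_zero]
  have hint : IntegrableOn (fun ζ => C * U ζ) S :=
    ((hU.continuous.const_mul C).continuousOn.integrableOn_compact
      (isCompact_closedBall 0 (1 / 2))).mono_set hsub
  rw [two_pi_mul_pd_eq hU hy, sub_sub_cancel_left, abs_neg, hrestrict]
  calc |∫ ζ in S, U ζ * errorKernel j y ζ| ≤ ∫ ζ in S, C * U ζ := by
        refine norm_integral_le_of_norm_le (f := fun ζ => U ζ * errorKernel j y ζ) hint ?_
        filter_upwards [ae_restrict_mem hSm] with ζ hζ
        have hUζ : 0 ≤ U ζ := hU0 ζ (hsub hζ)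
        rw [norm_mul, Real.norm_of_nonneg hUζ, mul_comm]
        exact mul_le_mul_of_nonneg_right (hE j y ζ hy) hUζ
    _ ≤ C * (2 * π * (1 / 2 * (1 / 2 - 3 / 8)) * M) := by
        rw [integral_const_mul]
        gcongr
        exact setIntegral_annulus_le hU (by norm_num) (by norm_num) hΔ hM hUM
    _ = C * (2 * π * (1 / 2 * (1 / 2 - 3 / 8))) * M := by ring

theorem exists_contDiff_eqOn_ball (ha : 0 < a) (hab : a < b)
    (hU : ∀ x ∈ ball 0 b, ContDiffAt ℝ 2 U x) :
    ∃ g : E2 → ℝ, ContDiff ℝ 2 g ∧ Set.EqOn g U (ball 0 a) := by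
  let φ : ContDiffBump (0 : E2) := ⟨a, (a + b) / 2, ha, by linarith⟩
  refine ⟨fun x => φ x * U x, contDiff_iff_contDiffAt.2 fun x => ?_, fun x hx => ?_⟩
  · by_cases hx : x ∈ tsupport φ
    · rw [φ.tsupport_eq] at hx
      exact φ.contDiffAt.mul (hU x (closedBall_subset_ball (by linarith : (a + b) / 2 < b) hx))
    · refine (contDiffAt_const (c := 0)).congr_of_eventuallyEq ?_
      filter_upwards [notMem_tsupport_iff_eventuallyEq.1 hx] with z hz
      simp only [hz, Pi.zero_apply, zero_mul]
  · simp only [φ.one_of_mem_closedBall (ball_subset_closedBall hx), one_mul]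

theorem exists_abs_two_pi_mul_pd_sub_le :
    ∃ C, 0 ≤ C ∧ ∀ (U : E2 → ℝ) (M : ℝ), (∀ x ∈ ball 0 (5 / 8), ContDiffAt ℝ 2 U x) →
      (∀ x ∈ ball 0 (5 / 8), lapl U x ≤ 0) → (∀ x ∈ ball 0 (5 / 8), 0 ≤ U x) →
      0 ≤ M → (∀ x, ‖x‖ = 3 / 8 → U x ≤ M) → ∀ (j : Fin 2) (y : E2), ‖y‖ ≤ 5 / 16 →
        |2 * π * pd j U y - ∫ ζ, cutoff ζ * lapl U ζ * gradLog j (y - ζ)| ≤ C * M := by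
  obtain ⟨C, hC, hrep⟩ := exists_abs_two_pi_mul_pd_sub_le_of_contDiff
  refine ⟨C, hC, fun U M hU hΔ hU0 hM hUM j y hy => ?_⟩
  obtain ⟨g, hg, hgU⟩ := exists_contDiff_eqOn_ball (a := 9 / 16) (by norm_num) (by norm_num) hU
  have hnhds {x : E2} (hx : ‖x‖ < 9 / 16) : g =ᶠ[𝓝 x] U :=
    hgU.eventuallyEq_of_mem (isOpen_ball.mem_nhds (mem_ball_zero_iff.2 hx))
  have hball {x : E2} (hx : ‖x‖ < 9 / 16) : x ∈ ball (0 : E2) (5 / 8) := by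
    rw [mem_ball_zero_iff]; linarith
  have key := hrep g M hg
    (fun x hx => by
      have hx' : ‖x‖ < 9 / 16 := by linarith [mem_ball_zero_iff.1 hx]
      exact (lapl_congr (hnhds hx')).trans_le (hΔ x (hball hx')))
    (fun x hx => by
      have hx' : ‖x‖ < 9 / 16 := by linarith [mem_closedBall_zero_iff.1 hx]
      exact (hU0 x (hball hx')).trans_eq (hnhds hx').eq_of_nhds.symm)
    hM (fun x hx => (hnhds (by linarith)).eq_of_nhds.trans_le (hUM x hx)) j y hy
  have hcut (ζ : E2) : cutoff ζ * lapl g ζ = cutoff ζ * lapl U ζ := by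
    rcases le_or_gt (1 / 2) ‖ζ‖ with h | h
    · simp only [cutoff_eq_zero h, zero_mul]
    · rw [lapl_congr (hnhds (by linarith))]
  rwa [pd_congr (hnhds (by linarith)), funext fun ζ => congrArg (· * _) (hcut ζ)] at key

end LocalRepresentation

section MinimumPrinciple

variable {Ω : Set E2} {u : E2 → ℝ} {x : E2}

theorem deriv_deriv_nonneg_of_isLocalMin {g : ℝ → ℝ} {t : ℝ} (hg : ContinuousAt g t)
    (h : IsLocalMin g t) : 0 ≤ deriv (deriv g) t := by
  by_contra! hneg
  have hmax : IsLocalMax g t := isLocalMax_of_deriv_deriv_neg hneg h.deriv_eq_zero hg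
  have hconst : g =ᶠ[𝓝 t] fun _ => g t := by
    filter_upwards [h, hmax] with s hs₁ hs₂ using le_antisymm hs₂ hs₁
  have : deriv (deriv g) t = 0 := by rw [hconst.deriv.deriv_eq]; simp
  exact hneg.ne this

theorem hasDerivAt_comp_add_smul_single {t : ℝ} {j : Fin 2}
    (h : DifferentiableAt ℝ u (x + t • EuclideanSpace.single j 1)) :
    HasDerivAt (fun t : ℝ => u (x + t • EuclideanSpace.single j 1))
      (pd j u (x + t • EuclideanSpace.single j 1)) t := by
  have hline : HasDerivAt (fun t : ℝ => x + t • (EuclideanSpace.single j 1 : E2))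
      (EuclideanSpace.single j 1) t := by
    simpa using ((hasDerivAt_id t).smul_const (EuclideanSpace.single j 1 : E2)).const_add x
  exact h.hasFDerivAt.comp_hasDerivAt t hline

theorem pd_pd_nonneg_of_isLocalMin (hu : ContDiffAt ℝ 2 u x) (h : IsLocalMin u x) (j : Fin 2) :
    0 ≤ pd j (pd j u) x := by
  set e : E2 := EuclideanSpace.single j 1
  have hline : Tendsto (fun t : ℝ => x + t • e) (𝓝 0) (𝓝 x) := by
    simpa using (by fun_prop : Continuous fun t : ℝ => x + t • e).tendsto 0
  have hdiff : ∀ᶠ t : ℝ in 𝓝 0, DifferentiableAt ℝ u (x + t • e) :=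
    hline.eventually <| (hu.eventually (by simp)).mono fun z hz => hz.differentiableAt two_ne_zero
  have hfirst : deriv (fun t : ℝ => u (x + t • e)) =ᶠ[𝓝 0] fun t => pd j u (x + t • e) :=
    hdiff.mono fun t ht => (hasDerivAt_comp_add_smul_single ht).deriv
  have hsecond : deriv (fun t : ℝ => pd j u (x + t • e)) 0 = pd j (pd j u) x := by
    have hpd : DifferentiableAt ℝ (pd j u) (x + (0 : ℝ) • e) := by
      simpa using (contDiffAt_pd hu j).differentiableAt one_ne_zero
    simpa using (hasDerivAt_comp_add_smul_single hpd).deriv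
  rw [← hsecond, ← hfirst.deriv_eq]
  refine deriv_deriv_nonneg_of_isLocalMin
    (hasDerivAt_comp_add_smul_single hdiff.self_of_nhds).continuousAt ?_
  filter_upwards [hline.eventually h] with t ht using by simpa using ht

theorem lapl_nonneg_of_isLocalMin (hu : ContDiffAt ℝ 2 u x) (h : IsLocalMin u x) :
    0 ≤ lapl u x :=
  add_nonneg (pd_pd_nonneg_of_isLocalMin hu h 0) (pd_pd_nonneg_of_isLocalMin hu h 1)

theorem lapl_add_const_mul_norm_sq (hu : ContDiffAt ℝ 2 u x) (c : ℝ) :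
    lapl (fun z => u z + c * ‖z‖ ^ 2) x = lapl u x + 4 * c := by
  have hsq (z : E2) : DifferentiableAt ℝ (fun z : E2 => c * ‖z‖ ^ 2) z :=
    (differentiableAt_id.norm_sq ℝ).const_mul c
  have hpd (j : Fin 2) (z : E2) : pd j (fun z => c * ‖z‖ ^ 2) z = 2 * c * z j := by
    have h : HasFDerivAt (fun z : E2 => c * ‖z‖ ^ 2) (c • 2 • innerSL ℝ z) z :=
      (hasStrictFDerivAt_norm_sq z).hasFDerivAt.const_mul c
    rw [pd, h.fderiv]
    simp only [smul_apply, coe_innerSL_apply, EuclideanSpace.inner_single_right,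
      Real.ringHom_apply, one_mul, nsmul_eq_mul, Nat.cast_ofNat, smul_eq_mul]
    ring
  have hfirst (j : Fin 2) :
      pd j (fun z => u z + c * ‖z‖ ^ 2) =ᶠ[𝓝 x] fun z => pd j u z + 2 * c * z j :=
    (hu.eventually (by simp)).mono fun z hz => by
      rw [pd_add (hz.differentiableAt two_ne_zero) (hsq z), hpd]
  have hsecond (j : Fin 2) :
      pd j (pd j fun z => u z + c * ‖z‖ ^ 2) x = pd j (pd j u) x + 2 * c := by
    rw [pd_congr (hfirst j), pd_add ((contDiffAt_pd hu j).differentiableAt one_ne_zero)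
      (by fun_prop), pd_mul (by fun_prop) (by fun_prop), pd_const, pd_apply]
    simp
  rw [lapl, lapl, hsecond, hsecond]
  ring

-- Adding `-ε‖x‖²` makes the superharmonic function strictly so.
theorem nonneg_of_lapl_nonpos (hΩ : IsOpen Ω) (hb : Bornology.IsBounded Ω)
    (hc : ContinuousOn u (closure Ω)) (hu : ∀ x ∈ Ω, ContDiffAt ℝ 2 u x)
    (hΔ : ∀ x ∈ Ω, lapl u x ≤ 0) (hfr : ∀ x ∈ frontier Ω, 0 ≤ u x) :
    ∀ x ∈ closure Ω, 0 ≤ u x := by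
  intro x₀ hx₀
  by_contra! hneg
  obtain ⟨R, hR, hΩR⟩ := hb.closure.exists_pos_norm_le
  set ε := -u x₀ / (2 * R ^ 2) with hε
  have hε0 : 0 < ε := div_pos (neg_pos.2 hneg) (by positivity)
  obtain ⟨x₁, hx₁, hmin⟩ := hb.isCompact_closure.exists_isMinOn ⟨x₀, hx₀⟩
    (f := fun x => u x + -ε * ‖x‖ ^ 2) (hc.add (by fun_prop))
  have hlt : u x₁ < 0 := by
    have hle : u x₁ + -ε * ‖x₁‖ ^ 2 ≤ u x₀ + -ε * ‖x₀‖ ^ 2 := hmin hx₀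
    have hεR : ε * R ^ 2 = -u x₀ / 2 := by rw [hε]; field_simp
    have hx₁R : ε * ‖x₁‖ ^ 2 ≤ ε * R ^ 2 := by gcongr; exact hΩR x₁ hx₁
    nlinarith [mul_nonneg hε0.le (sq_nonneg ‖x₀‖)]
  have hx₁Ω : x₁ ∈ Ω := by
    by_contra h
    exact hlt.not_ge (hfr x₁ ⟨hx₁, by rwa [hΩ.interior_eq]⟩)
  have hloc : IsLocalMin (fun x => u x + -ε * ‖x‖ ^ 2) x₁ :=
    hmin.isLocalMin (mem_of_superset (hΩ.mem_nhds hx₁Ω) subset_closure)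
  have hsq : ContDiffAt ℝ 2 (fun x : E2 => ‖x‖ ^ 2) x₁ := contDiffAt_id.norm_sq ℝ
  have hΔ₁ := lapl_nonneg_of_isLocalMin ((hu x₁ hx₁Ω).add (contDiffAt_const.mul hsq)) hloc
  rw [lapl_add_const_mul_norm_sq (hu x₁ hx₁Ω)] at hΔ₁
  linarith [hΔ x₁ hx₁Ω]

end MinimumPrinciple

section RescaledSolution

/-- Solutions of `-Δv = W eᵛ` obtained by blowing up a solution `u` of the Dirichlet problem at its
maximum point `x₀`, at distance `δ` from the boundary: `W` and `v` are `V` and `u - u x₀` in the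
variable `z = (x - x₀) / r`, the scale is `κ = r / δ`, and `M` bounds `u` at distance `3δ/8` from
`x₀`. The constant in `exists_bound` is `u x₀`. -/
structure IsRescaledSolution (b M κ : ℝ) (W v : E2 → ℝ) : Prop where
  scale_pos : 0 < κ
  contDiffAt : ∀ z, κ * ‖z‖ < 5 / 8 → ContDiffAt ℝ 2 v z
  potential_mem : ∀ z, κ * ‖z‖ < 5 / 8 → W z ∈ Set.Icc 0 b
  nonpos : ∀ z, κ * ‖z‖ < 5 / 8 → v z ≤ 0
  neg_lapl_eq : ∀ z, κ * ‖z‖ < 5 / 8 → -lapl v z = W z * Real.exp (v z)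
  exists_bound : ∃ c, (∀ z, κ * ‖z‖ < 5 / 8 → 0 ≤ v z + c) ∧ ∀ z, κ * ‖z‖ = 3 / 8 → v z + c ≤ M

/-- The local mass `∫ W eᵛ` over the ball corresponding to `B(x₀, δ/2)` in the original variable. -/
noncomputable def localMass (κ : ℝ) (W v : E2 → ℝ) : ℝ :=
  ∫ z in ball (0 : E2) (2 * κ)⁻¹, W z * Real.exp (v z)

/-- The localized mass density `W eᵛ`, which is the source of the Newtonian potential representing
the gradient of a rescaled solution. -/
noncomputable def density (κ : ℝ) (W v : E2 → ℝ) (z : E2) : ℝ :=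
  cutoff (κ • z) * (W z * Real.exp (v z))

theorem norm_smul_of_scale_pos {κ : ℝ} (hκ : 0 < κ) (z : E2) : ‖κ • z‖ = κ * ‖z‖ :=
  norm_smul_of_nonneg hκ.le z

namespace IsRescaledSolution

variable {b M κ : ℝ} {W v : E2 → ℝ} {z : E2}

theorem bound_nonneg (h : IsRescaledSolution b M κ W v) : 0 ≤ b :=
  have hW := h.potential_mem 0 (by norm_num)
  hW.1.trans hW.2

theorem density_eq (h : IsRescaledSolution b M κ W v) (hz : κ * ‖z‖ ≤ 3 / 8) :
    density κ W v z = W z * Real.exp (v z) := by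
  rw [density, cutoff_eq_one (by rwa [norm_smul_of_scale_pos h.scale_pos]), one_mul]

theorem density_eq_zero (h : IsRescaledSolution b M κ W v) (hz : 1 / 2 ≤ κ * ‖z‖) :
    density κ W v z = 0 := by
  rw [density, cutoff_eq_zero (by rwa [norm_smul_of_scale_pos h.scale_pos]), zero_mul]

theorem density_eq_neg_cutoff_mul_lapl (h : IsRescaledSolution b M κ W v) (z : E2) :
    density κ W v z = -(cutoff (κ • z) * lapl v z) := by
  rcases lt_or_ge (κ * ‖z‖) (5 / 8) with hz | hz
  · rw [density, ← h.neg_lapl_eq z hz, mul_neg]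
  · rw [h.density_eq_zero (by linarith),
      cutoff_eq_zero (by rw [norm_smul_of_scale_pos h.scale_pos]; linarith), zero_mul, neg_zero]

theorem potential_mul_exp_nonneg (h : IsRescaledSolution b M κ W v) (hz : κ * ‖z‖ < 5 / 8) :
    0 ≤ W z * Real.exp (v z) :=
  mul_nonneg (h.potential_mem z hz).1 (Real.exp_nonneg _)

theorem density_nonneg (h : IsRescaledSolution b M κ W v) (z : E2) : 0 ≤ density κ W v z := by
  rcases lt_or_ge (κ * ‖z‖) (5 / 8) with hz | hz
  · exact mul_nonneg cutoff.nonneg (h.potential_mul_exp_nonneg hz)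
  · exact (h.density_eq_zero (by linarith)).ge

theorem density_le_mul_exp (h : IsRescaledSolution b M κ W v) (z : E2) :
    density κ W v z ≤ b * Real.exp (v z) := by
  rcases lt_or_ge (κ * ‖z‖) (5 / 8) with hz | hz
  · calc density κ W v z ≤ W z * Real.exp (v z) :=
          mul_le_of_le_one_left (h.potential_mul_exp_nonneg hz) cutoff.le_one
      _ ≤ b * Real.exp (v z) := by gcongr; exact (h.potential_mem z hz).2
  · rw [h.density_eq_zero (by linarith)]
    exact mul_nonneg h.bound_nonneg (Real.exp_nonneg _)

theorem density_le (h : IsRescaledSolution b M κ W v) (z : E2) : density κ W v z ≤ b := by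
  rcases lt_or_ge (κ * ‖z‖) (5 / 8) with hz | hz
  · exact (h.density_le_mul_exp z).trans
      (mul_le_of_le_one_right h.bound_nonneg (Real.exp_le_one_iff.2 (h.nonpos z hz)))
  · exact (h.density_eq_zero (by linarith)).trans_le h.bound_nonneg

theorem continuous_density (h : IsRescaledSolution b M κ W v) : Continuous (density κ W v) := by
  refine continuous_iff_continuousAt.2 fun z => ?_
  rcases lt_or_ge (κ * ‖z‖) (5 / 8) with hz | hz
  · rw [funext h.density_eq_neg_cutoff_mul_lapl]
    exact ((cutoff.continuous.comp (continuous_const_smul κ)).continuousAt.mul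
      (continuousAt_lapl (h.contDiffAt z hz))).neg
  · refine (continuousAt_const (y := (0 : ℝ))).congr ?_
    filter_upwards [(isOpen_lt (by fun_prop : Continuous fun _ : E2 => (1 / 2 : ℝ))
      (by fun_prop : Continuous fun w : E2 => κ * ‖w‖)).mem_nhds (by grind : 1 / 2 < κ * ‖z‖)]
      with w hw
    exact (h.density_eq_zero (le_of_lt hw)).symm

theorem hasCompactSupport_density (h : IsRescaledSolution b M κ W v) :
    HasCompactSupport (density κ W v) :=
  HasCompactSupport.mul_right (cutoff.hasCompactSupport.comp_smul h.scale_pos.ne')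

theorem integrable_density (h : IsRescaledSolution b M κ W v) : Integrable (density κ W v) :=
  h.continuous_density.integrable_of_hasCompactSupport h.hasCompactSupport_density

theorem integral_density_le_localMass (h : IsRescaledSolution b M κ W v) :
    ∫ z, density κ W v z ≤ localMass κ W v := by
  have hball {z : E2} : κ * ‖z‖ < 1 / 2 ↔ z ∈ ball (0 : E2) (2 * κ)⁻¹ := by
    rw [mem_ball_zero_iff, mul_inv, ← div_eq_mul_inv, lt_div_iff₀ h.scale_pos, mul_comm κ,
      one_div]
  have hcb {z : E2} (hz : z ∈ closedBall (0 : E2) (2 * κ)⁻¹) : κ * ‖z‖ < 5 / 8 := by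
    rw [mem_closedBall_zero_iff, mul_inv, ← div_eq_mul_inv, le_div_iff₀ h.scale_pos] at hz
    linarith
  have hint : IntegrableOn (fun z => W z * Real.exp (v z)) (ball (0 : E2) (2 * κ)⁻¹) := by
    refine IntegrableOn.mono_set ?_ ball_subset_closedBall
    refine ContinuousOn.integrableOn_compact (isCompact_closedBall _ _) ?_
    refine ContinuousOn.congr (fun z hz => ?_) fun z hz => (h.neg_lapl_eq z (hcb hz)).symm
    exact (continuousAt_lapl (h.contDiffAt z (hcb hz))).continuousWithinAt.neg
  calc ∫ z, density κ W v z = ∫ z in ball (0 : E2) (2 * κ)⁻¹, density κ W v z := by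
        refine (setIntegral_eq_integral_of_forall_compl_eq_zero fun z hz => ?_).symm
        exact h.density_eq_zero (not_lt.1 (mt hball.1 hz))
    _ ≤ localMass κ W v := by
        refine setIntegral_mono_on h.integrable_density.integrableOn hint measurableSet_ball
          fun z hz => mul_le_of_le_one_left ?_ cutoff.le_one
        exact h.potential_mul_exp_nonneg (hcb (ball_subset_closedBall hz))

theorem integral_cutoff_mul_lapl_mul_gradLog_sub (h : IsRescaledSolution b M κ W v) (θ : E2)
    (j : Fin 2) : ∫ y, cutoff y * lapl (fun y => v (κ⁻¹ • y)) y * gradLog j (κ • θ - y) =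
      -(κ⁻¹ * ∫ ζ, density κ W v ζ * gradLog j (θ - ζ)) := by
  have hκ := h.scale_pos
  rw [integral_eq_sq_mul_integral_comp_smul _ hκ, ← neg_mul, ← integral_const_mul,
    ← integral_const_mul]
  congr 1 with ζ
  rw [lapl_comp_smul, inv_smul_smul₀ hκ.ne', ← smul_sub, gradLog_smul,
    h.density_eq_neg_cutoff_mul_lapl]
  field_simp

end IsRescaledSolution

theorem exists_abs_two_pi_mul_pd_add_le (M : ℝ) :
    ∃ C, 0 ≤ C ∧ ∀ (b κ : ℝ) (W v : E2 → ℝ), IsRescaledSolution b M κ W v →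
      ∀ (j : Fin 2) (θ : E2), κ * ‖θ‖ ≤ 5 / 16 →
        |2 * π * pd j v θ + ∫ ζ, density κ W v ζ * gradLog j (θ - ζ)| ≤ C * κ := by
  obtain ⟨C, hC, hrep⟩ := exists_abs_two_pi_mul_pd_sub_le
  refine ⟨C * |M|, by positivity, fun b κ W v h j θ hθ => ?_⟩
  have hκ := h.scale_pos
  obtain ⟨c, hc0, hcM⟩ := h.exists_bound
  have hscale (x : E2) : κ * ‖κ⁻¹ • x‖ = ‖x‖ := by
    rw [← norm_smul_of_scale_pos hκ, smul_inv_smul₀ hκ.ne']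
  have hmem {x : E2} (hx : x ∈ ball 0 (5 / 8)) : κ * ‖κ⁻¹ • x‖ < 5 / 8 := by
    rwa [hscale, ← mem_ball_zero_iff]
  have key := hrep (fun y => v (κ⁻¹ • y) + c) |M|
    (fun x hx => ((h.contDiffAt _ (hmem hx)).comp x (contDiffAt_id.const_smul κ⁻¹)).add
      contDiffAt_const)
    (fun x hx => by
      rw [lapl_add_const, lapl_comp_smul, ← neg_nonneg, ← mul_neg, h.neg_lapl_eq _ (hmem hx)]
      exact mul_nonneg (sq_nonneg _) (h.potential_mul_exp_nonneg (hmem hx)))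
    (fun x hx => hc0 _ (hmem hx)) (abs_nonneg M)
    (fun x hx => (hcM _ (by rw [hscale, hx])).trans (le_abs_self M)) j (κ • θ)
    (by rwa [norm_smul_of_scale_pos hκ])
  simp only [lapl_add_const, pd_add_const, pd_comp_smul,
    h.integral_cutoff_mul_lapl_mul_gradLog_sub, inv_smul_smul₀ hκ.ne'] at key
  calc |2 * π * pd j v θ + ∫ ζ, density κ W v ζ * gradLog j (θ - ζ)|
      = |κ * (2 * π * (κ⁻¹ * pd j v θ) - -(κ⁻¹ * ∫ ζ, density κ W v ζ * gradLog j (θ - ζ)))| := by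
        congr 1; field_simp; ring
    _ ≤ κ * (C * |M|) := by rw [abs_mul, abs_of_pos hκ]; gcongr
    _ = C * |M| * κ := mul_comm _ _

end RescaledSolution

section BlowUpAtMaximum

variable {u V : E2 → ℝ} {x₀ : E2} {δ r b M : ℝ}

theorem isRescaledSolution_of_isMaxOn (hu : ContDiffOn ℝ 2 u (closedBall 0 1))
    (hV : ∀ x ∈ ball 0 1, V x ∈ Set.Icc 0 b)
    (hpde : ∀ x ∈ ball 0 1, -lapl u x = V x * Real.exp (u x)) (hbc : ∀ x ∈ sphere 0 1, u x = 0)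
    (hmax : IsMaxOn u (closedBall 0 1) x₀) (hδ : 0 < δ) (hδ₁ : ‖x₀‖ + δ ≤ 1)
    (hr : r = Real.exp (-u x₀ / 2)) (hM : ∀ y, ‖y‖ = 3 / 8 → u (x₀ + δ • y) ≤ M) :
    IsRescaledSolution b M (r / δ) (fun z => V (x₀ + r • z))
      fun z => u (x₀ + r • z) - u x₀ := by
  have hr0 : 0 < r := hr ▸ Real.exp_pos _
  have hmem (z : E2) (hz : r / δ * ‖z‖ < 5 / 8) : x₀ + r • z ∈ ball 0 1 := by
    have : r * ‖z‖ < 5 / 8 * δ := by rwa [div_mul_eq_mul_div, div_lt_iff₀ hδ] at hz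
    rw [mem_ball_zero_iff]
    calc ‖x₀ + r • z‖ ≤ ‖x₀‖ + r * ‖z‖ := by
          rw [← norm_smul_of_nonneg hr0.le]; exact norm_add_le _ _
      _ < 1 := by linarith
  have hu2 (x : E2) (hx : x ∈ ball 0 1) : ContDiffAt ℝ 2 u x :=
    hu.contDiffAt (mem_of_superset (isOpen_ball.mem_nhds hx) ball_subset_closedBall)
  have hu0 : ∀ x ∈ closure (ball (0 : E2) 1), 0 ≤ u x := by
    refine nonneg_of_lapl_nonpos isOpen_ball isBounded_ball ?_ hu2 (fun x hx => ?_) fun x hx => ?_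
    · rw [closure_ball _ one_ne_zero]; exact hu.continuousOn
    · rw [← neg_nonneg, hpde x hx]
      exact mul_nonneg (hV x hx).1 (Real.exp_nonneg _)
    · rw [frontier_ball _ one_ne_zero] at hx
      exact (hbc x hx).ge
  refine ⟨by positivity, fun z hz => ?_, fun z hz => hV _ (hmem z hz), fun z hz => ?_,
    fun z hz => ?_, u x₀, fun z hz => ?_, fun z hz => ?_⟩
  · exact ((hu2 _ (hmem z hz)).comp z (by fun_prop)).sub contDiffAt_const
  · exact sub_nonpos.2 (hmax (ball_subset_closedBall (hmem z hz)))
  · simp only [sub_eq_add_neg, lapl_add_const, lapl_comp_add_smul]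
    rw [← mul_neg, hpde _ (hmem z hz), Real.exp_add, hr, ← Real.exp_nat_mul]
    push_cast
    rw [mul_div_cancel₀ _ two_ne_zero]
    ring
  · rw [sub_add_cancel]
    exact hu0 _ (subset_closure (hmem z hz))
  · have : δ • (r / δ) • z = r • z := by rw [smul_smul, mul_div_cancel₀ _ hδ.ne']
    rw [sub_add_cancel, ← this]
    exact hM _ (by rw [norm_smul_of_scale_pos (by positivity), hz])

theorem localMass_comp_add_smul (x₀ : E2) (hδ : 0 < δ) (hr : r = Real.exp (-u x₀ / 2)) :
    localMass (r / δ) (fun z => V (x₀ + r • z)) (fun z => u (x₀ + r • z) - u x₀) =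
      ∫ y in ball x₀ (δ / 2), V y * Real.exp (u y) := by
  have hr0 : 0 < r := hr ▸ Real.exp_pos _
  have hexp (t : ℝ) : Real.exp (t - u x₀) = r ^ 2 * Real.exp t := by
    rw [hr, ← Real.exp_nat_mul, ← Real.exp_add]; congr 1; push_cast; ring
  have hball (z : E2) : x₀ + r • z ∈ ball x₀ (δ / 2) ↔ z ∈ ball 0 (2 * (r / δ))⁻¹ := by
    rw [mem_ball_iff_norm, add_sub_cancel_left, norm_smul_of_nonneg hr0.le, mem_ball_zero_iff,
      ← lt_div_iff₀' hr0]
    congr! 1; field_simp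
  have hsubst := integral_eq_sq_mul_integral_comp_smul
    (fun y => (ball x₀ (δ / 2)).indicator (fun y => V y * Real.exp (u y)) (x₀ + y)) hr0
  rw [integral_add_left_eq_self] at hsubst
  rw [localMass, ← integral_indicator measurableSet_ball, ← integral_indicator measurableSet_ball,
    hsubst, ← integral_const_mul]
  congr 1 with z
  by_cases hz : z ∈ ball 0 (2 * (r / δ))⁻¹
  · rw [Set.indicator_of_mem hz, Set.indicator_of_mem ((hball z).2 hz), hexp]; ring
  · rw [Set.indicator_of_notMem hz, Set.indicator_of_notMem (mt (hball z).1 hz), mul_zero]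

end BlowUpAtMaximum

section PointwiseLimit

variable {α : Type*} [MeasurableSpace α] {μ : Measure α} {F : ℕ → α → ℝ} {G : α → ℝ} {m : ℕ → ℝ}
  {L : ℝ}

theorem lintegral_ofReal_le_of_tendsto (hF : ∀ i, Integrable (F i) μ) (hF0 : ∀ i z, 0 ≤ F i z)
    (hle : ∀ i, ∫ z, F i z ∂μ ≤ m i) (hm : Tendsto m atTop (𝓝 L))
    (hlim : ∀ z, Tendsto (fun i => F i z) atTop (𝓝 (G z))) :
    ∫⁻ z, ENNReal.ofReal (G z) ∂μ ≤ ENNReal.ofReal L := calc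
  ∫⁻ z, ENNReal.ofReal (G z) ∂μ = ∫⁻ z, liminf (fun i => ENNReal.ofReal (F i z)) atTop ∂μ := by
        simp_rw [fun z => (ENNReal.tendsto_ofReal (hlim z)).liminf_eq]
    _ ≤ liminf (fun i => ∫⁻ z, ENNReal.ofReal (F i z) ∂μ) atTop :=
        lintegral_liminf_le' fun i => (hF i).aemeasurable.ennreal_ofReal
    _ ≤ liminf (fun i => ENNReal.ofReal (m i)) atTop := by
        refine liminf_le_liminf (.of_forall fun i => ?_)
        rw [← ofReal_integral_eq_lintegral_ofReal (hF i) (.of_forall (hF0 i))]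
        exact ENNReal.ofReal_le_ofReal (hle i)
    _ = ENNReal.ofReal L := (ENNReal.tendsto_ofReal hm).liminf_eq

theorem integrable_of_tendsto_of_integral_le (hF : ∀ i, Integrable (F i) μ)
    (hF0 : ∀ i z, 0 ≤ F i z) (hle : ∀ i, ∫ z, F i z ∂μ ≤ m i) (hm : Tendsto m atTop (𝓝 L))
    (hlim : ∀ z, Tendsto (fun i => F i z) atTop (𝓝 (G z))) : Integrable G μ := by
  refine (lintegral_ofReal_ne_top_iff_integrable (aestronglyMeasurable_of_tendsto_ae atTop
    (fun i => (hF i).1) (.of_forall hlim)) (.of_forall fun z => ?_)).1 ?_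
  · exact ge_of_tendsto' (hlim z) fun i => hF0 i z
  · exact ne_top_of_le_ne_top ENNReal.ofReal_ne_top
      (lintegral_ofReal_le_of_tendsto hF hF0 hle hm hlim)

end PointwiseLimit

section PotentialLimit

variable {f : ℕ → E2 → ℝ} {g : E2 → ℝ} {m : ℕ → ℝ} {B L η : ℝ}

theorem exists_integral_compl_ball_le (hf : ∀ i, Integrable (f i)) (hf0 : ∀ i z, 0 ≤ f i z)
    (hfB : ∀ i z, f i z ≤ B) (hle : ∀ i, ∫ z, f i z ≤ m i) (hm : Tendsto m atTop (𝓝 L))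
    (hg : Integrable g) (hgL : ∫ z, g z = L)
    (hlim : ∀ z, Tendsto (fun i => f i z) atTop (𝓝 (g z))) (hη : 0 < η) :
    ∃ k : ℝ, 1 ≤ k ∧ ∀ᶠ i in atTop,
      ∫ z in (ball (0 : E2) k)ᶜ, f i z ≤ η ∧ |(∫ z in ball (0 : E2) k, f i z) - L| ≤ η := by
  have hcover := (aecover_ball (μ := (volume : Measure E2)) (x := 0)
    (tendsto_id (α := ℝ) (x := atTop))).integral_tendsto_of_countably_generated hg
  obtain ⟨k, hk, hk1⟩ := ((hcover.eventually (lt_mem_nhds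
    (show L - η / 2 < ∫ z, g z by linarith))).and (eventually_ge_atTop 1)).exists
  have hball : Tendsto (fun i => ∫ z in ball (0 : E2) k, f i z) atTop
      (𝓝 (∫ z in ball (0 : E2) k, g z)) :=
    tendsto_integral_of_dominated_convergence (fun _ => B) (fun i => (hf i).1.restrict)
      (integrableOn_const measure_ball_lt_top.ne)
      (fun i => .of_forall fun z => by rw [Real.norm_of_nonneg (hf0 i z)]; exact hfB i z)
      (.of_forall hlim)
  refine ⟨k, hk1, ?_⟩
  filter_upwards [hball.eventually (lt_mem_nhds hk),
    hm.eventually (gt_mem_nhds (show L < L + η / 2 by linarith))] with i hi hmi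
  have hsplit := integral_add_compl (measurableSet_ball (x := (0 : E2)) (ε := k)) (hf i)
  have hcompl : 0 ≤ ∫ z in (ball (0 : E2) k)ᶜ, f i z := integral_nonneg (hf0 i)
  have := hle i
  exact ⟨by linarith, abs_le.2 ⟨by linarith, by linarith⟩⟩

theorem tendsto_integral_mul_gradLog_sub (hf : ∀ i, Integrable (f i)) (hf0 : ∀ i z, 0 ≤ f i z)
    (hfB : ∀ i z, f i z ≤ B) (hle : ∀ i, ∫ z, f i z ≤ m i) (hm : Tendsto m atTop (𝓝 L))
    (hlim : ∀ z, Tendsto (fun i => f i z) atTop (𝓝 (g z))) (θ : E2) (j : Fin 2) :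
    Tendsto (fun i => ∫ ζ, f i ζ * gradLog j (θ - ζ)) atTop (𝓝 (∫ ζ, g ζ * gradLog j (θ - ζ))) := by
  have hg := integrable_of_tendsto_of_integral_le hf hf0 hle hm hlim
  have hg0 (z : E2) : 0 ≤ g z := ge_of_tendsto' (hlim z) fun i => hf0 i z
  have hgB (z : E2) : g z ≤ B := le_of_tendsto' (hlim z) fun i => hfB i z
  have hbdd {h : E2 → ℝ} (h0 : ∀ z, 0 ≤ h z) (hB : ∀ z, h z ≤ B) (z : E2) : |h z| ≤ B := by
    rw [abs_of_nonneg (h0 z)]; exact hB z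
  have hsplit {h : E2 → ℝ} (hh : Integrable h) (h0 : ∀ z, 0 ≤ h z) (hB : ∀ z, h z ≤ B) {R : ℝ}
      (hR : 0 < R) : |(∫ ζ, h ζ * gradLog j (θ - ζ)) - ∫ ζ in ball θ R, h ζ * gradLog j (θ - ζ)| ≤
        (∫ ζ, h ζ) / R := by
    rw [← integral_add_compl measurableSet_ball
      (integrable_mul_gradLog_sub hh hR (fun z _ => hbdd h0 hB z) j), add_sub_cancel_left]
    refine (abs_setIntegral_compl_ball_mul_gradLog_sub_le hh h0 hR j).trans ?_
    exact div_le_div_of_nonneg_right (setIntegral_le_integral hh (.of_forall h0)) hR.le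
  have hnear (R : ℝ) : Tendsto (fun i => ∫ ζ in ball θ R, f i ζ * gradLog j (θ - ζ)) atTop
      (𝓝 (∫ ζ in ball θ R, g ζ * gradLog j (θ - ζ))) := by
    refine tendsto_integral_of_dominated_convergence (fun ζ => B * ‖θ - ζ‖⁻¹) (fun i => ?_)
      ((integrableOn_inv_norm_sub_ball θ R).const_mul B) (fun i => .of_forall fun z => ?_)
      (.of_forall fun z => (hlim z).mul_const _)
    · exact ((hf i).1.mul
        ((measurable_gradLog j).comp (by fun_prop)).aestronglyMeasurable).restrict
    · refine (abs_mul_gradLog_sub_le (f i) j θ z).trans ?_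
      gcongr
      exact hbdd (hf0 i) (hfB i) z
  refine Metric.tendsto_nhds.2 fun e he => ?_
  obtain ⟨R, hRe, hR⟩ := (((tendsto_const_nhds (x := L + 1 + ∫ z, g z)).div_atTop
    tendsto_id).eventually (gt_mem_nhds (half_pos he)) |>.and (eventually_gt_atTop 0)).exists
  filter_upwards [Metric.tendsto_nhds.1 (hnear R) _ (half_pos he),
    hm.eventually (gt_mem_nhds (lt_add_one L))] with i hi hmi
  have hfar₁ := hsplit (hf i) (hf0 i) (hfB i) hR
  have hfar₂ := hsplit hg hg0 hgB hR
  have hmass : (∫ ζ, f i ζ) / R + (∫ ζ, g ζ) / R ≤ (L + 1 + ∫ z, g z) / R := by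
    rw [← add_div]
    gcongr
    exact (hle i).trans hmi.le
  rw [Real.dist_eq, abs_lt] at *
  rw [abs_le] at *
  constructor <;> simp only [id] at hRe <;> linarith

end PotentialLimit

section BlowUpSequence

/-- A blow-up sequence: rescaled solutions on disks exhausting the plane, whose potentials tend to
the constant `V₀`, whose local masses tend to `8π` and which converge to `u₀` in `C¹_loc`. -/
structure IsBlowUpSequence (b M V₀ : ℝ) (κ : ℕ → ℝ) (W v : ℕ → E2 → ℝ) (u₀ : E2 → ℝ) : Prop where
  isRescaledSolution : ∀ i, IsRescaledSolution b M (κ i) (W i) (v i)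
  tendsto_scale : Tendsto κ atTop (𝓝 0)
  tendsto_localMass : Tendsto (fun i => localMass (κ i) (W i) (v i)) atTop (𝓝 (8 * π))
  limit_pos : 0 < V₀
  potential_near : ∀ η > 0, ∀ᶠ i in atTop, ∀ z, κ i * ‖z‖ ≤ 3 / 8 → |W i z - V₀| ≤ η
  tendstoUniformlyOn : ∀ K, IsCompact K → TendstoUniformlyOn v u₀ atTop K
  tendstoUniformlyOn_fderiv : ∀ K, IsCompact K →
    TendstoUniformlyOn (fun i => fderiv ℝ (v i)) (fderiv ℝ u₀) atTop K

namespace IsBlowUpSequence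

variable {b M V₀ : ℝ} {κ : ℕ → ℝ} {W v : ℕ → E2 → ℝ} {u₀ : E2 → ℝ}

theorem eventually_scale_mul_norm_lt (h : IsBlowUpSequence b M V₀ κ W v u₀) (R : ℝ) {a : ℝ}
    (ha : 0 < a) : ∀ᶠ i in atTop, ∀ z ∈ closedBall (0 : E2) R, κ i * ‖z‖ < a := by
  have hR : Tendsto (fun i => κ i * R) atTop (𝓝 0) := by simpa using h.tendsto_scale.mul_const R
  filter_upwards [hR.eventually (gt_mem_nhds ha)] with i hi z hz
  exact (mul_le_mul_of_nonneg_left (mem_closedBall_zero_iff.1 hz)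
    (h.isRescaledSolution i).scale_pos.le).trans_lt hi

theorem eventually_scale_mul_norm_lt_at (h : IsBlowUpSequence b M V₀ κ W v u₀) (z : E2) {a : ℝ}
    (ha : 0 < a) : ∀ᶠ i in atTop, κ i * ‖z‖ < a :=
  (h.eventually_scale_mul_norm_lt ‖z‖ ha).mono fun _ hi => hi z (by simp)

theorem tendsto_apply (h : IsBlowUpSequence b M V₀ κ W v u₀) (z : E2) :
    Tendsto (fun i => v i z) atTop (𝓝 (u₀ z)) :=
  (h.tendstoUniformlyOn {z} isCompact_singleton).tendsto_at rfl

theorem tendsto_pd (h : IsBlowUpSequence b M V₀ κ W v u₀) (j : Fin 2) (z : E2) :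
    Tendsto (fun i => pd j (v i) z) atTop (𝓝 (pd j u₀ z)) :=
  ((ContinuousLinearMap.apply ℝ ℝ (EuclideanSpace.single j 1)).continuous.tendsto _).comp
    ((h.tendstoUniformlyOn_fderiv {z} isCompact_singleton).tendsto_at rfl)

theorem differentiable_limit (h : IsBlowUpSequence b M V₀ κ W v u₀) : Differentiable ℝ u₀ := by
  intro z
  have hnhds : closedBall 0 (‖z‖ + 1) ∈ 𝓝 z := closedBall_mem_nhds_of_mem (by simp)
  have hunif := (h.tendstoUniformlyOn_fderiv _ (isCompact_closedBall 0 (‖z‖ + 1))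
    ).tendstoUniformlyOnFilter.mono_right (le_principal_iff.2 hnhds)
  refine (hasFDerivAt_of_tendstoUniformlyOnFilter hunif ?_
    (.of_forall h.tendsto_apply)).differentiableAt
  filter_upwards [(h.eventually_scale_mul_norm_lt (‖z‖ + 1) (by norm_num : (0 : ℝ) < 5 / 8)).prod_mk
    (eventually_mem_set.2 hnhds)] with n hn
  exact (((h.isRescaledSolution n.1).contDiffAt n.2 (hn.1 n.2 hn.2)).differentiableAt
    two_ne_zero).hasFDerivAt

theorem limit_nonpos (h : IsBlowUpSequence b M V₀ κ W v u₀) (z : E2) : u₀ z ≤ 0 := by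
  refine le_of_tendsto (h.tendsto_apply z) ?_
  filter_upwards [h.eventually_scale_mul_norm_lt_at z (by norm_num : (0 : ℝ) < 5 / 8)] with i hi
  exact (h.isRescaledSolution i).nonpos z hi

theorem tendsto_potential (h : IsBlowUpSequence b M V₀ κ W v u₀) (z : E2) :
    Tendsto (fun i => W i z) atTop (𝓝 V₀) := by
  refine Metric.tendsto_nhds.2 fun e he => ?_
  filter_upwards [h.potential_near (e / 2) (half_pos he),
    h.eventually_scale_mul_norm_lt_at z (by norm_num : (0 : ℝ) < 3 / 8)] with i hi hz
  exact (hi z hz.le).trans_lt (half_lt_self he)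

theorem tendsto_density (h : IsBlowUpSequence b M V₀ κ W v u₀) (z : E2) :
    Tendsto (fun i => density (κ i) (W i) (v i) z) atTop (𝓝 (V₀ * Real.exp (u₀ z))) := by
  refine ((h.tendsto_potential z).mul
    ((Real.continuous_exp.tendsto _).comp (h.tendsto_apply z))).congr' ?_
  filter_upwards [h.eventually_scale_mul_norm_lt_at z (by norm_num : (0 : ℝ) < 3 / 8)] with i hi
  exact ((h.isRescaledSolution i).density_eq hi.le).symm

theorem integrable_limit (h : IsBlowUpSequence b M V₀ κ W v u₀) :
    Integrable fun z => V₀ * Real.exp (u₀ z) :=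
  integrable_of_tendsto_of_integral_le (fun i => (h.isRescaledSolution i).integrable_density)
    (fun i => (h.isRescaledSolution i).density_nonneg)
    (fun i => (h.isRescaledSolution i).integral_density_le_localMass) h.tendsto_localMass
    h.tendsto_density

theorem two_pi_mul_pd_limit_eq (h : IsBlowUpSequence b M V₀ κ W v u₀) (j : Fin 2) (θ : E2) :
    2 * π * pd j u₀ θ = -∫ ζ, V₀ * Real.exp (u₀ ζ) * gradLog j (θ - ζ) := by
  obtain ⟨C, -, hC⟩ := exists_abs_two_pi_mul_pd_add_le M
  have hpotential := tendsto_integral_mul_gradLog_sub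
    (fun i => (h.isRescaledSolution i).integrable_density)
    (fun i => (h.isRescaledSolution i).density_nonneg)
    (fun i => (h.isRescaledSolution i).density_le)
    (fun i => (h.isRescaledSolution i).integral_density_le_localMass) h.tendsto_localMass
    h.tendsto_density θ j
  have hzero : Tendsto (fun i => 2 * π * pd j (v i) θ +
      ∫ ζ, density (κ i) (W i) (v i) ζ * gradLog j (θ - ζ)) atTop (𝓝 0) := by
    refine squeeze_zero_norm' ?_ (by simpa using h.tendsto_scale.const_mul C)
    filter_upwards [h.eventually_scale_mul_norm_lt_at θ (by norm_num : (0 : ℝ) < 5 / 16)] with i hi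
    exact hC b _ _ _ (h.isRescaledSolution i) j θ hi.le
  linarith [tendsto_nhds_unique (((h.tendsto_pd j θ).const_mul (2 * π)).add hpotential) hzero]

end IsBlowUpSequence

end BlowUpSequence

section Virial

theorem abs_mul_gradLog_le_one {c : ℝ} {w : E2} (hc : |c| ≤ ‖w‖) (j : Fin 2) :
    |c * gradLog j w| ≤ 1 := by
  rw [abs_mul]
  exact (mul_le_mul hc (abs_gradLog_le j w) (abs_nonneg _) (norm_nonneg _)).trans
    (mul_inv_le_one)

theorem apply_mul_gradLog_add {w : E2} (hw : w ≠ 0) :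
    w 0 * gradLog 0 w + w 1 * gradLog 1 w = 1 := by
  rw [gradLog, gradLog, mul_div_assoc', mul_div_assoc', ← add_div, ← sq, ← sq, ← norm_sq_eq_add]
  exact div_self (pow_ne_zero 2 (norm_ne_zero_iff.2 hw))

/-- The bounded `1`-Lipschitz truncation `sin (a x_j) / a` of the coordinate `x_j`. It is used as a
component of a vector field that approximates the position vector `x` as `a → 0`. -/
noncomputable def sinCoord (a : ℝ) (j : Fin 2) (x : E2) : ℝ :=
  Real.sin (a * x j) / a

theorem differentiable_sinCoord (a : ℝ) (j : Fin 2) : Differentiable ℝ (sinCoord a j) := by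
  unfold sinCoord
  fun_prop

theorem abs_sinCoord_le {a : ℝ} (ha : 0 < a) (j : Fin 2) (x : E2) : |sinCoord a j x| ≤ 1 / a := by
  rw [sinCoord, abs_div, abs_of_pos ha]
  exact div_le_div_of_nonneg_right (Real.abs_sin_le_one _) ha.le

theorem abs_sinCoord_sub_le {a : ℝ} (ha : 0 < a) (j : Fin 2) (x y : E2) :
    |sinCoord a j x - sinCoord a j y| ≤ ‖x - y‖ := by
  rw [sinCoord, sinCoord, ← sub_div, abs_div, abs_of_pos ha, div_le_iff₀' ha]
  refine (Real.abs_sin_sub_sin_le _ _).trans ?_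
  rw [← mul_sub, abs_mul, abs_of_pos ha]
  exact mul_le_mul_of_nonneg_left (abs_apply_le_norm (x - y) j) ha.le

theorem pd_sinCoord {a : ℝ} (ha : a ≠ 0) (j : Fin 2) (x : E2) :
    pd j (sinCoord a j) x = Real.cos (a * x j) := by
  have hcoord : HasFDerivAt (fun z : E2 => a * z j) (a • EuclideanSpace.proj j) x :=
    (EuclideanSpace.proj (𝕜 := ℝ) j).hasFDerivAt.const_mul a
  have hderiv := (hcoord.sin.mul_const a⁻¹).fderiv
  simp only [← div_eq_mul_inv] at hderiv
  rw [pd, show sinCoord a j = fun z : E2 => Real.sin (a * z j) / a from rfl, hderiv]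
  simp [field]

theorem tendsto_sinCoord (j : Fin 2) (x : E2) :
    Tendsto (fun a => sinCoord a j x) (𝓝[>] 0) (𝓝 (x j)) := by
  have hsin : HasDerivAt (fun a => Real.sin (a * x j)) (x j) 0 := by
    simpa using ((hasDerivAt_id (0 : ℝ)).mul_const (x j)).sin
  refine ((hasDerivAt_iff_tendsto_slope_zero.1 hsin).mono_left
    (nhdsWithin_mono 0 fun a ha => (Set.mem_Ioi.1 ha).ne')).congr fun a => ?_
  simp [sinCoord, div_eq_inv_mul]

variable {f : E2 → ℝ} {B : ℝ}

theorem integral_mul_inv_norm_sub_le_add_div (hf : Integrable f) (hf0 : ∀ z, 0 ≤ f z) {x : E2}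
    {a : ℝ} (ha : 0 < a) (hfB : ∀ z ∈ ball x a, f z ≤ B) :
    ∫ z, f z * ‖x - z‖⁻¹ ≤ 2 * π * a * B + (∫ z, f z) / a :=
  (integral_mul_inv_norm_sub_le hf hf0 ha hfB).trans (add_le_add_right
    (div_le_div_of_nonneg_right (setIntegral_le_integral hf (.of_forall hf0)) ha.le) _)

theorem abs_integral_mul_gradLog_sub_le (hf : Integrable f) (hf0 : ∀ z, 0 ≤ f z) {x : E2} {a : ℝ}
    (ha : 0 < a) (hfB : ∀ z ∈ ball x a, f z ≤ B) (j : Fin 2) :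
    |∫ z, f z * gradLog j (x - z)| ≤ 2 * π * a * B + (∫ z, f z) / a := by
  refine (norm_integral_le_of_norm_le (f := fun z => f z * gradLog j (x - z))
    (integrable_mul_inv_norm_sub (x := x) (B := B) hf ha fun z hz => ?_)
    (.of_forall fun z => ?_)).trans (integral_mul_inv_norm_sub_le_add_div hf hf0 ha hfB)
  · rw [abs_of_nonneg (hf0 z)]
    exact hfB z hz
  · simpa only [abs_of_nonneg (hf0 z)] using! abs_mul_gradLog_sub_le f j x z

theorem integrable_prod_mul_gradLog_sub (hf : Integrable f) (hfm : Measurable f)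
    (hf0 : ∀ z, 0 ≤ f z) (hfB : ∀ z, f z ≤ B) {g : E2 → ℝ} (hgm : Measurable g) {D : ℝ}
    (hgD : ∀ z, |g z| ≤ D) (j : Fin 2) :
    Integrable fun p : E2 × E2 => f p.1 * f p.2 * (g p.1 * gradLog j (p.1 - p.2)) := by
  have hK := measurable_gradLog j
  have hmeas : AEStronglyMeasurable
      (fun p : E2 × E2 => f p.1 * f p.2 * (g p.1 * gradLog j (p.1 - p.2))) :=
    (by fun_prop : Measurable _).aestronglyMeasurable
  have hslice (x : E2) : Integrable fun z => f x * |g x| * (f z * ‖x - z‖⁻¹) :=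
    (integrable_mul_inv_norm_sub (x := x) (B := B) hf one_pos fun z _ =>
      (abs_of_nonneg (hf0 z)).trans_le (hfB z)).const_mul _
  have hle (x z : E2) : ‖f x * f z * (g x * gradLog j (x - z))‖ ≤
      f x * |g x| * (f z * ‖x - z‖⁻¹) := by
    rw [Real.norm_eq_abs, abs_mul, abs_mul, abs_mul, abs_of_nonneg (hf0 x), abs_of_nonneg (hf0 z)]
    calc f x * f z * (|g x| * |gradLog j (x - z)|)
        ≤ f x * f z * (|g x| * ‖x - z‖⁻¹) :=
          mul_le_mul_of_nonneg_left
            (mul_le_mul_of_nonneg_left (abs_gradLog_le j _) (abs_nonneg _))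
            (mul_nonneg (hf0 x) (hf0 z))
      _ = f x * |g x| * (f z * ‖x - z‖⁻¹) := by ring
  rw [Measure.volume_eq_prod] at hmeas ⊢
  refine (integrable_prod_iff hmeas).2 ⟨.of_forall fun x => (hslice x).mono'
    ((by fun_prop : Measurable _).aestronglyMeasurable) (.of_forall (hle x)), ?_⟩
  refine (hf.mul_const (D * (2 * π * 1 * B + (∫ z, f z) / 1))).mono' hmeas.norm.integral_prod_right'
    (.of_forall fun x => ?_)
  rw [Real.norm_of_nonneg (integral_nonneg fun z => norm_nonneg _)]
  calc ∫ z, ‖f x * f z * (g x * gradLog j (x - z))‖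
      ≤ ∫ z, f x * |g x| * (f z * ‖x - z‖⁻¹) :=
        integral_mono_of_nonneg (.of_forall fun _ => norm_nonneg _) (hslice x)
          (.of_forall (hle x))
    _ = f x * (|g x| * ∫ z, f z * ‖x - z‖⁻¹) := by rw [integral_const_mul, mul_assoc]
    _ ≤ f x * (D * (2 * π * 1 * B + (∫ z, f z) / 1)) := by
        refine mul_le_mul_of_nonneg_left (mul_le_mul (hgD x)
          (integral_mul_inv_norm_sub_le_add_div hf hf0 one_pos fun z _ => hfB z)
          (integral_nonneg fun z => mul_nonneg (hf0 z) (by positivity))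
          ((abs_nonneg _).trans (hgD x))) (hf0 x)

theorem two_mul_integral_mul_integral_gradLog_sub (hf : Integrable f) (hfm : Measurable f)
    (hf0 : ∀ z, 0 ≤ f z) (hfB : ∀ z, f z ≤ B) {g : E2 → ℝ} (hgm : Measurable g) {D : ℝ}
    (hgD : ∀ z, |g z| ≤ D) (j : Fin 2) :
    2 * ∫ x, f x * g x * ∫ z, f z * gradLog j (x - z) =
      ∫ p : E2 × E2, f p.1 * f p.2 * ((g p.1 - g p.2) * gradLog j (p.1 - p.2)) := by
  have hint := integrable_prod_mul_gradLog_sub hf hfm hf0 hfB hgm hgD j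
  have hiterated : ∫ x, f x * g x * ∫ z, f z * gradLog j (x - z) =
      ∫ p : E2 × E2, f p.1 * f p.2 * (g p.1 * gradLog j (p.1 - p.2)) := by
    rw [Measure.volume_eq_prod, integral_prod _ (by rwa [Measure.volume_eq_prod] at hint)]
    refine integral_congr_ae (.of_forall fun x => ?_)
    simp only [← integral_const_mul]
    exact integral_congr_ae (.of_forall fun z => by ring)
  have hswap : ∫ p : E2 × E2, f p.1 * f p.2 * (g p.1 * gradLog j (p.1 - p.2)) =
      ∫ p : E2 × E2, f p.2 * f p.1 * (g p.2 * gradLog j (p.2 - p.1)) :=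
    (integral_prod_swap fun p : E2 × E2 => f p.1 * f p.2 * (g p.1 * gradLog j (p.1 - p.2))).symm
  have hint_swap : Integrable fun p : E2 × E2 =>
      f p.2 * f p.1 * (g p.2 * gradLog j (p.2 - p.1)) := hint.swap
  rw [two_mul, hiterated]
  nth_rw 2 [hswap]
  rw [← integral_add hint hint_swap]
  refine integral_congr_ae (.of_forall fun p => ?_)
  simp only
  rw [← neg_sub p.1 p.2, gradLog_neg]
  ring

theorem two_pi_mul_integral_mul_pd (hf : Integrable f) (hf0 : ∀ z, 0 ≤ f z)
    (hfB : ∀ z, f z ≤ B) (hfd : Differentiable ℝ f) {j : Fin 2}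
    (hpd : ∀ x, 2 * π * pd j f x = -(f x * ∫ z, f z * gradLog j (x - z))) {g : E2 → ℝ}
    (hgd : Differentiable ℝ g) {D D' : ℝ} (hgD : ∀ x, |g x| ≤ D) (hgD' : ∀ x, |pd j g x| ≤ D') :
    2 * π * ∫ x, f x * pd j g x = ∫ x, f x * g x * ∫ z, f z * gradLog j (x - z) := by
  have hbound (x : E2) :=
    abs_integral_mul_gradLog_sub_le (x := x) hf hf0 one_pos (fun z _ => hfB z) j
  have hpd_le (x : E2) : ‖pd j f x‖ ≤ (2 * π)⁻¹ * (2 * π * 1 * B + (∫ z, f z) / 1) * f x := by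
    have : pd j f x = (2 * π)⁻¹ * -(f x * ∫ z, f z * gradLog j (x - z)) := by
      rw [← hpd, inv_mul_cancel_left₀ (by positivity)]
    rw [this, norm_mul, norm_neg, norm_mul, Real.norm_of_nonneg (hf0 x),
      Real.norm_of_nonneg (by positivity : 0 ≤ (2 * π)⁻¹), mul_assoc, mul_comm (f x)]
    exact mul_le_mul_of_nonneg_left (mul_le_mul_of_nonneg_right (hbound x) (hf0 x)) (by positivity)
  have hpdf : Integrable (pd j f) := (hf.const_mul _).mono'
    (measurable_fderiv_apply_const ℝ f _).aestronglyMeasurable (.of_forall hpd_le)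
  have hparts : ∫ x, f x * pd j g x = -∫ x, pd j f x * g x :=
    integral_mul_fderiv_eq_neg_fderiv_mul_of_integrable
      (hpdf.mul_bdd hgd.continuous.aestronglyMeasurable (.of_forall hgD))
      (hf.mul_bdd (measurable_fderiv_apply_const ℝ g _).aestronglyMeasurable (.of_forall hgD'))
      (hf.mul_bdd hgd.continuous.aestronglyMeasurable (.of_forall hgD))
      (fun x _ => hfd x) (fun x _ => hgd x)
  rw [hparts, ← integral_neg, ← integral_const_mul]
  refine integral_congr_ae (.of_forall fun x => ?_)
  simp only
  rw [mul_neg, ← mul_assoc, hpd]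
  ring

theorem integrable_prod_mul_apply_mul_gradLog_sub (hf : Integrable f) (j : Fin 2) :
    Integrable fun p : E2 × E2 => f p.1 * f p.2 * ((p.1 - p.2) j * gradLog j (p.1 - p.2)) := by
  have hK := measurable_gradLog j
  refine (hf.mul_prod hf).mul_bdd (c := 1) (by fun_prop : Measurable _).aestronglyMeasurable
    (.of_forall fun p => abs_mul_gradLog_le_one (abs_apply_le_norm _ j) j)

theorem tendsto_integral_sinCoord_mul_gradLog_sub (hf : Integrable f) (j : Fin 2) :
    Tendsto (fun a => ∫ p : E2 × E2, f p.1 * f p.2 *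
        ((sinCoord a j p.1 - sinCoord a j p.2) * gradLog j (p.1 - p.2))) (𝓝[>] 0)
      (𝓝 (∫ p : E2 × E2, f p.1 * f p.2 * ((p.1 - p.2) j * gradLog j (p.1 - p.2)))) := by
  have hprod : Integrable fun p : E2 × E2 => f p.1 * f p.2 := hf.mul_prod hf
  refine tendsto_integral_filter_of_dominated_convergence _ (.of_forall fun a => ?_) ?_ hprod.norm
    (.of_forall fun p => (((tendsto_sinCoord j p.1).sub (tendsto_sinCoord j p.2)).mul_const
      _).const_mul _)
  · have hK := measurable_gradLog j
    have hg := (differentiable_sinCoord a j).continuous.measurable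
    exact hprod.1.mul (by fun_prop : Measurable _).aestronglyMeasurable
  · filter_upwards [self_mem_nhdsWithin] with a ha
    refine .of_forall fun p => ?_
    rw [norm_mul]
    exact mul_le_of_le_one_right (norm_nonneg _)
      (abs_mul_gradLog_le_one (abs_sinCoord_sub_le ha j p.1 p.2) j)

theorem tendsto_integral_mul_pd_sinCoord (hf : Integrable f) (j : Fin 2) :
    Tendsto (fun a => ∫ x, f x * pd j (sinCoord a j) x) (𝓝[>] 0) (𝓝 (∫ x, f x)) := by
  refine tendsto_integral_filter_of_dominated_convergence _ (.of_forall fun a => ?_) ?_ hf.norm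
    (.of_forall fun x => ?_)
  · exact hf.1.mul (measurable_fderiv_apply_const ℝ _ _).aestronglyMeasurable
  · filter_upwards [self_mem_nhdsWithin] with a ha
    refine .of_forall fun x => ?_
    rw [norm_mul, pd_sinCoord (Set.mem_Ioi.1 ha).ne']
    exact mul_le_of_le_one_right (norm_nonneg _) (Real.abs_cos_le_one _)
  · have hcos : Tendsto (fun a => f x * Real.cos (a * x j)) (𝓝 0) (𝓝 (f x)) := by
      simpa using (by fun_prop : Continuous fun a => f x * Real.cos (a * x j)).tendsto 0
    refine (hcos.mono_left nhdsWithin_le_nhds).congr' ?_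
    filter_upwards [self_mem_nhdsWithin] with a ha
    rw [pd_sinCoord (Set.mem_Ioi.1 ha).ne']

-- The virial identity, obtained by testing against `sinCoord a j` and letting `a → 0`.
theorem four_pi_mul_integral_eq (hf : Integrable f) (hf0 : ∀ z, 0 ≤ f z) (hfB : ∀ z, f z ≤ B)
    (hfd : Differentiable ℝ f) {j : Fin 2}
    (hpd : ∀ x, 2 * π * pd j f x = -(f x * ∫ z, f z * gradLog j (x - z))) :
    4 * π * ∫ x, f x =
      ∫ p : E2 × E2, f p.1 * f p.2 * ((p.1 - p.2) j * gradLog j (p.1 - p.2)) := by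
  refine tendsto_nhds_unique ((tendsto_integral_mul_pd_sinCoord hf j).const_mul (4 * π))
    ((tendsto_integral_sinCoord_mul_gradLog_sub hf j).congr' ?_)
  filter_upwards [self_mem_nhdsWithin] with a ha
  have hcos (x : E2) : |pd j (sinCoord a j) x| ≤ 1 := by
    rw [pd_sinCoord (Set.mem_Ioi.1 ha).ne']
    exact Real.abs_cos_le_one _
  rw [← two_mul_integral_mul_integral_gradLog_sub hf hfd.continuous.measurable hf0 hfB
    (differentiable_sinCoord a j).continuous.measurable (abs_sinCoord_le ha j) j,
    ← two_pi_mul_integral_mul_pd hf hf0 hfB hfd hpd (differentiable_sinCoord a j)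
      (abs_sinCoord_le ha j) hcos]
  ring

theorem ae_fst_ne_snd : ∀ᵐ p : E2 × E2, p.1 ≠ p.2 := by
  rw [Measure.volume_eq_prod]
  refine (Measure.ae_prod_mem_iff_ae_ae_mem
    (measurableSet_eq_fun measurable_fst measurable_snd).compl).2 (.of_forall fun x => ?_)
  filter_upwards [Measure.ae_ne volume x] with z hz using hz.symm

theorem integral_eq_eight_pi (hf : Integrable f) (hfpos : ∀ z, 0 < f z) (hfB : ∀ z, f z ≤ B)
    (hfd : Differentiable ℝ f)
    (hpd : ∀ j x, 2 * π * pd j f x = -(f x * ∫ z, f z * gradLog j (x - z))) :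
    ∫ x, f x = 8 * π := by
  have hf0 (z : E2) : 0 ≤ f z := (hfpos z).le
  have hmass : 0 < ∫ x, f x := by
    rw [integral_pos_iff_support_of_nonneg hf0 hf,
      show Function.support f = Set.univ from Set.eq_univ_of_forall fun z => (hfpos z).ne']
    simp
  have hvirial : 4 * π * (∫ x, f x) + 4 * π * ∫ x, f x = (∫ x, f x) * ∫ x, f x := by
    rw [← integral_prod_mul, ← Measure.volume_eq_prod]
    nth_rw 1 [four_pi_mul_integral_eq hf hf0 hfB hfd (hpd 0)]
    rw [four_pi_mul_integral_eq hf hf0 hfB hfd (hpd 1),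
      ← integral_add (integrable_prod_mul_apply_mul_gradLog_sub hf 0)
        (integrable_prod_mul_apply_mul_gradLog_sub hf 1)]
    refine integral_congr_ae ?_
    filter_upwards [ae_fst_ne_snd] with p hp
    rw [← mul_add, apply_mul_gradLog_add (sub_ne_zero.2 hp), mul_one]
  refine (mul_right_cancel₀ hmass.ne' ?_).symm
  rw [← hvirial]
  ring

theorem IsBlowUpSequence.integral_limit_eq {b M V₀ : ℝ} {κ : ℕ → ℝ} {W v : ℕ → E2 → ℝ}
    {u₀ : E2 → ℝ} (h : IsBlowUpSequence b M V₀ κ W v u₀) :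
    ∫ z, V₀ * Real.exp (u₀ z) = 8 * π := by
  have hV₀ := h.limit_pos
  refine integral_eq_eight_pi (B := V₀) h.integrable_limit (fun z => by positivity) (fun z => ?_)
    ((h.differentiable_limit.exp).const_mul V₀) fun j x => ?_
  · exact mul_le_of_le_one_right hV₀.le (Real.exp_le_one_iff.2 (h.limit_nonpos z))
  · have hderiv : pd j (fun z => V₀ * Real.exp (u₀ z)) x = V₀ * Real.exp (u₀ x) * pd j u₀ x := by
      rw [pd, ((h.differentiable_limit x).hasFDerivAt.exp.const_mul V₀).fderiv]
      simp [pd, mul_assoc]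
    rw [hderiv, mul_left_comm, h.two_pi_mul_pd_limit_eq j x, mul_neg]

end Virial

section NeckRegularity

-- A doubling lemma: `s` is the natural scale of `eᵍ` at a well-chosen point `w`.
theorem exists_ball_subset_forall_exp_le {X : Type*} [PseudoMetricSpace X] [ProperSpace X]
    {g : X → ℝ} {z : X} {R : ℝ} (hR : 0 ≤ R) (hg : ContinuousOn g (closedBall z R))
    (hlarge : 4 < R ^ 2 * Real.exp (g z)) :
    ∃ w s, 0 < s ∧ s ^ 2 * Real.exp (g w) = 1 ∧ s + dist w z ≤ R ∧
      ∀ y ∈ ball w s, Real.exp (g y) ≤ 4 * Real.exp (g w) := by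
  obtain ⟨w, hw, hmax⟩ := (isCompact_closedBall z R).exists_isMaxOn (nonempty_closedBall.2 hR)
    (f := fun y => (R - dist y z) ^ 2 * Real.exp (g y)) (by fun_prop)
  obtain ⟨s, hs, hscale⟩ : ∃ s, 0 < s ∧ s ^ 2 * Real.exp (g w) = 1 := by
    refine ⟨Real.exp (-g w / 2), Real.exp_pos _, ?_⟩
    rw [← Real.exp_nat_mul, ← Real.exp_add]
    simp [mul_div_cancel₀]
  have hwz : 0 ≤ R - dist w z := sub_nonneg.2 hw
  have hroom : 2 * s < R - dist w z := by
    have hcentre : R ^ 2 * Real.exp (g z) ≤ (R - dist w z) ^ 2 * Real.exp (g w) := by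
      simpa using hmax (mem_closedBall_self hR)
    refine lt_of_pow_lt_pow_left₀ 2 hwz (lt_of_mul_lt_mul_right ?_ (Real.exp_nonneg (g w)))
    linarith
  have hsub : s + dist w z ≤ R := by linarith
  refine ⟨w, s, hs, hscale, hsub, fun y hy => ?_⟩
  have hdist : (R - dist w z) / 2 ≤ R - dist y z := by
    linarith [dist_triangle y w z, mem_ball.1 hy]
  refine le_of_mul_le_mul_left ?_ (pow_pos (by linarith : 0 < (R - dist w z) / 2) 2)
  calc ((R - dist w z) / 2) ^ 2 * Real.exp (g y)
      ≤ (R - dist y z) ^ 2 * Real.exp (g y) := by gcongr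
    _ ≤ (R - dist w z) ^ 2 * Real.exp (g w) :=
        hmax (ball_subset_closedBall (ball_subset_ball' hsub hy))
    _ = ((R - dist w z) / 2) ^ 2 * (4 * Real.exp (g w)) := by ring

theorem norm_fderiv_le_of_abs_pd_le {f : E2 → ℝ} {x : E2} {D : ℝ} (h : ∀ j, |pd j f x| ≤ D) :
    ‖fderiv ℝ f x‖ ≤ 2 * D := by
  have hD : 0 ≤ D := (abs_nonneg _).trans (h 0)
  refine ContinuousLinearMap.opNorm_le_bound _ (by positivity) fun w => ?_
  rw [fderiv_apply_eq_pd, Real.norm_eq_abs]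
  calc |w 0 * pd 0 f x + w 1 * pd 1 f x| ≤ |w 0| * |pd 0 f x| + |w 1| * |pd 1 f x| := by
        simpa only [abs_mul] using abs_add_le (w 0 * pd 0 f x) (w 1 * pd 1 f x)
    _ ≤ ‖w‖ * D + ‖w‖ * D := by
        gcongr
        exacts [abs_apply_le_norm w 0, h 0, abs_apply_le_norm w 1, h 1]
    _ = 2 * D * ‖w‖ := by ring

theorem exists_abs_pd_le_div (M : ℝ) : ∃ C, 0 ≤ C ∧ ∀ b κ W v, IsRescaledSolution b M κ W v →
    ∀ z s B, 0 < s → s ≤ ‖z‖ → κ * ‖z‖ ≤ 5 / 16 →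
      (∀ w ∈ ball z s, density κ W v w ≤ B / s ^ 2) →
      ∀ j, |pd j v z| ≤ (C + 2 * π * B + localMass κ W v) / s := by
  obtain ⟨C, hC0, hC⟩ := exists_abs_two_pi_mul_pd_add_le M
  refine ⟨C, hC0, fun b κ W v h z s B hs hsz hz hB j => ?_⟩
  have hrep := hC b κ W v h j z hz
  have hpotential := abs_integral_mul_gradLog_sub_le h.integrable_density h.density_nonneg hs hB j
  have hmass : (∫ w, density κ W v w) / s ≤ localMass κ W v / s :=
    div_le_div_of_nonneg_right h.integral_density_le_localMass hs.le
  have hκ : C * κ ≤ C / s := by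
    rw [div_eq_mul_inv, ← one_div]
    refine mul_le_mul_of_nonneg_left ((le_div_iff₀ hs).2 ?_) hC0
    linarith [mul_le_mul_of_nonneg_left hsz h.scale_pos.le]
  have hpi : |pd j v z| ≤ |2 * π * pd j v z| := by
    rw [abs_mul, abs_of_pos (by positivity : 0 < 2 * π)]
    exact le_mul_of_one_le_left (abs_nonneg _) (by linarith [Real.pi_gt_three])
  calc |pd j v z| ≤ |2 * π * pd j v z| := hpi
    _ ≤ |2 * π * pd j v z + ∫ w, density κ W v w * gradLog j (z - w)| +
          |∫ w, density κ W v w * gradLog j (z - w)| := by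
        simpa using abs_sub_le (2 * π * pd j v z) (-∫ w, density κ W v w * gradLog j (z - w)) 0
    _ ≤ C / s + (2 * π * s * (B / s ^ 2) + localMass κ W v / s) := by linarith
    _ = (C + 2 * π * B + localMass κ W v) / s := by field_simp; ring

variable {b m a₀ : ℝ}

theorem abs_sub_le_one_of_abs_pd_le {f : E2 → ℝ} {z w : E2} {s D : ℝ} (hs : 0 < s) (hD : 0 ≤ D)
    (hf : ∀ y ∈ ball z (s / 2), DifferentiableAt ℝ f y)
    (hpd : ∀ y ∈ ball z (s / 2), ∀ j, |pd j f y| ≤ D / s) (hw : w ∈ ball z (s / (2 * (D + 1)))) :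
    |f w - f z| ≤ 1 := by
  have hsub : ball z (s / (2 * (D + 1))) ⊆ ball z (s / 2) := by
    refine ball_subset_ball ?_
    gcongr
    linarith
  calc |f w - f z| ≤ 2 * (D / s) * ‖w - z‖ :=
        (convex_ball z (s / 2)).norm_image_sub_le_of_norm_fderiv_le (𝕜 := ℝ) hf
          (fun y hy => norm_fderiv_le_of_abs_pd_le (hpd y hy)) (mem_ball_self (by positivity))
          (hsub hw)
    _ ≤ 2 * (D / s) * (s / (2 * (D + 1))) := by
        gcongr
        exact (mem_ball_iff_norm.1 hw).le
    _ = D / (D + 1) := by field_simp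
    _ ≤ 1 := div_le_one_of_le₀ (by linarith) (by positivity)

theorem scale_mul_norm_le_of_mem_ball {κ a s : ℝ} {z w : E2} (hκ : 0 ≤ κ)
    (h : κ * (‖z‖ + s) ≤ a) (hw : w ∈ ball z s) : κ * ‖w‖ ≤ a := by
  refine (mul_le_mul_of_nonneg_left ?_ hκ).trans h
  linarith [norm_le_norm_add_norm_sub' w z, mem_ball_iff_norm.1 hw]

theorem exists_abs_pd_le_of_forall_exp_le (M : ℝ) (hb : 0 ≤ b) (hm : 0 ≤ m) :
    ∃ D, 0 ≤ D ∧ ∀ κ W v, IsRescaledSolution b M κ W v → localMass κ W v ≤ m →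
      ∀ z s, 0 < s → s ≤ ‖z‖ → κ * (‖z‖ + s) ≤ 5 / 16 →
      (∀ w ∈ ball z s, Real.exp (v w) ≤ 4 / s ^ 2) →
      ∀ w ∈ ball z (s / 2), ∀ j, |pd j v w| ≤ D / s := by
  obtain ⟨C, hC0, hC⟩ := exists_abs_pd_le_div M
  refine ⟨2 * (C + 2 * π * b + m), by positivity, ?_⟩
  intro κ W v h hmass z s hs hsz hregion hexp w hw j
  have hdensity (y : E2) (hy : y ∈ ball w (s / 2)) : density κ W v y ≤ b / (s / 2) ^ 2 := calc
    density κ W v y ≤ b * Real.exp (v y) := h.density_le_mul_exp y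
    _ ≤ b * (4 / s ^ 2) := mul_le_mul_of_nonneg_left
        (hexp y (ball_subset_ball' (by linarith [mem_ball.1 hw]) hy)) hb
    _ = b / (s / 2) ^ 2 := by field_simp; norm_num
  have hκw := scale_mul_norm_le_of_mem_ball h.scale_pos.le hregion
    (ball_subset_ball (by linarith) hw)
  have hsw : s / 2 ≤ ‖w‖ := by
    linarith [norm_le_norm_add_norm_sub w z, mem_ball_iff_norm.1 hw]
  refine (hC b κ W v h w (s / 2) b (by positivity) hsw hκw hdensity j).trans ?_
  rw [div_div_eq_mul_div, mul_comm]
  gcongr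

-- At its natural scale `s`, the gradient of `v` is `O(1/s)`, so `eᵛ` is comparable to `1/s²` on a
-- ball of radius a fixed multiple of `s`.
theorem exists_le_setIntegral_density (M : ℝ) (hb : 0 ≤ b) (hm : 0 ≤ m) (ha₀ : 0 < a₀) :
    ∃ c, 0 < c ∧ ∀ κ W v, IsRescaledSolution b M κ W v → localMass κ W v ≤ m →
      (∀ z, κ * ‖z‖ ≤ 3 / 8 → a₀ ≤ W z) → ∀ z s, 0 < s → s ^ 2 * Real.exp (v z) = 1 →
      s ≤ ‖z‖ → κ * (‖z‖ + s) ≤ 5 / 16 →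
      (∀ w ∈ ball z s, Real.exp (v w) ≤ 4 * Real.exp (v z)) →
      c ≤ ∫ w in ball z s, density κ W v w := by
  obtain ⟨D, hD, hpd⟩ := exists_abs_pd_le_of_forall_exp_le M hb hm
  refine ⟨π * a₀ * Real.exp (-1) / (2 * (D + 1)) ^ 2, by positivity, ?_⟩
  intro κ W v h hmass hW z s hs hscale hsz hregion hexp
  have hexpz : Real.exp (v z) = 1 / s ^ 2 := (eq_div_iff (by positivity)).2 (by linarith)
  set t := s / (2 * (D + 1)) with ht
  have ht0 : 0 < t := by positivity
  have hts : ball z t ⊆ ball z s := by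
    refine ball_subset_ball (div_le_self hs.le ?_)
    linarith
  have hregion' (w : E2) (hw : w ∈ ball z s) : κ * ‖w‖ ≤ 5 / 16 :=
    scale_mul_norm_le_of_mem_ball h.scale_pos.le hregion hw
  have hclose (w : E2) (hw : w ∈ ball z t) : |v w - v z| ≤ 1 := by
    refine abs_sub_le_one_of_abs_pd_le hs hD (fun y hy => ?_) (hpd κ W v h hmass z s hs hsz hregion
      fun y hy => (hexp y hy).trans_eq (by rw [hexpz, mul_one_div])) hw
    have hy' := hregion' y (ball_subset_ball (by linarith) hy)
    exact (h.contDiffAt y (by linarith)).differentiableAt two_ne_zero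
  have hlower (w : E2) (hw : w ∈ ball z t) : a₀ * Real.exp (-1) / s ^ 2 ≤ density κ W v w := by
    have hκw := hregion' w (hts hw)
    rw [h.density_eq (by linarith)]
    calc a₀ * Real.exp (-1) / s ^ 2 = a₀ * Real.exp (-1 + v z) := by
          rw [Real.exp_add, hexpz]; ring
      _ ≤ W w * Real.exp (v w) :=
          mul_le_mul (hW w (by linarith))
            (Real.exp_le_exp.2 (by linarith [(abs_le.1 (hclose w hw)).1])) (Real.exp_nonneg _)
            (h.potential_mem w (by linarith)).1
  calc π * a₀ * Real.exp (-1) / (2 * (D + 1)) ^ 2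
      = ∫ _ in ball z t, a₀ * Real.exp (-1) / s ^ 2 := by
        rw [setIntegral_const, measureReal_def, EuclideanSpace.volume_ball_fin_two,
          ENNReal.toReal_mul, ENNReal.toReal_pow, ENNReal.toReal_ofReal ht0.le, ht]
        simp [field, ENNReal.toReal_ofReal Real.pi_nonneg]
    _ ≤ ∫ w in ball z t, density κ W v w :=
        setIntegral_mono_on (integrableOn_const measure_ball_lt_top.ne)
          h.integrable_density.integrableOn measurableSet_ball hlower
    _ ≤ ∫ w in ball z s, density κ W v w :=
        setIntegral_mono_set h.integrable_density.integrableOn (.of_forall h.density_nonneg)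
          (.of_forall hts)

theorem exists_norm_sq_mul_exp_le (M : ℝ) (hb : 0 ≤ b) (hm : 0 ≤ m) (ha₀ : 0 < a₀) :
    ∃ c, 0 < c ∧ ∀ κ W v, IsRescaledSolution b M κ W v → localMass κ W v ≤ m →
      (∀ z, κ * ‖z‖ ≤ 3 / 8 → a₀ ≤ W z) →
      ∀ k, ∫ w in (ball (0 : E2) k)ᶜ, density κ W v w < c →
      ∀ z, 2 * k ≤ ‖z‖ → κ * ‖z‖ ≤ 9 / 32 → ‖z‖ ^ 2 * Real.exp (v z) ≤ 324 := by
  obtain ⟨c, hc, hmass_ge⟩ := exists_le_setIntegral_density M hb hm ha₀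
  refine ⟨c, hc, fun κ W v h hmass hW k hk z hkz hz => ?_⟩
  by_contra! hlarge
  have hκ := h.scale_pos
  have hregion (y : E2) (hy : y ∈ closedBall z (‖z‖ / 9)) : κ * ‖y‖ ≤ 5 / 16 := by
    have hyz : ‖y‖ ≤ 10 / 9 * ‖z‖ := by
      linarith [norm_le_norm_add_norm_sub' y z, mem_closedBall_iff_norm.1 hy]
    linarith [mul_le_mul_of_nonneg_left hyz hκ.le]
  obtain ⟨w, s, hs, hscale, hws, hexp⟩ := exists_ball_subset_forall_exp_le
    (g := v) (z := z) (R := ‖z‖ / 9) (by positivity)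
    (fun y hy => (h.contDiffAt y (by linarith [hregion y hy])).continuousAt.continuousWithinAt)
    (by linarith)
  have hnorm := norm_le_norm_add_norm_sub w z
  have hnorm' := norm_le_norm_add_norm_sub' w z
  rw [← dist_eq_norm] at hnorm hnorm'
  have hfar : ball w s ⊆ (ball (0 : E2) k)ᶜ := fun y hy => by
    have hyz := mem_ball.1 (ball_subset_ball' hws hy)
    have := norm_le_norm_add_norm_sub y z
    rw [← dist_eq_norm] at this
    simp only [Set.mem_compl_iff, mem_ball_zero_iff, not_lt]
    linarith [norm_nonneg z]
  have hge := hmass_ge κ W v h hmass hW w s hs hscale (by linarith [dist_nonneg (x := w) (y := z)])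
    ((mul_le_mul_of_nonneg_left (by linarith : ‖w‖ + s ≤ 10 / 9 * ‖z‖) hκ.le).trans (by linarith))
    hexp
  exact (hge.trans (setIntegral_mono_set h.integrable_density.integrableOn
    (.of_forall h.density_nonneg) hfar.eventuallyLE)).not_gt hk

end NeckRegularity

section NeckPotential

variable {f : E2 → ℝ} {b M κ : ℝ} {W v : E2 → ℝ}

theorem gradLog_eq_inversion (j : Fin 2) (w : E2) :
    gradLog j w = EuclideanGeometry.inversion (0 : E2) 1 w j := by
  simp [EuclideanGeometry.inversion, gradLog, div_eq_inv_mul]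

theorem abs_gradLog_sub_gradLog_le (j : Fin 2) {z w : E2} (hz : z ≠ 0) (hw : w ≠ 0) :
    |gradLog j z - gradLog j w| ≤ ‖z - w‖ / (‖z‖ * ‖w‖) := by
  have hdist := EuclideanGeometry.dist_inversion_inversion hz hw 1
  have hcoord := abs_apply_le_norm (EuclideanGeometry.inversion (0 : E2) 1 z -
    EuclideanGeometry.inversion (0 : E2) 1 w) j
  rw [← dist_eq_norm, hdist] at hcoord
  simpa [gradLog_eq_inversion, dist_eq_norm, div_eq_inv_mul] using hcoord

theorem abs_gradLog_sub_sub_gradLog_le (j : Fin 2) {k : ℝ} {θ ζ : E2} (hθ : θ ≠ 0)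
    (hk : 2 * k ≤ ‖θ‖) (hζ : ‖ζ‖ ≤ k) :
    |gradLog j (θ - ζ) - gradLog j θ| ≤ 2 * k / ‖θ‖ ^ 2 := by
  have hθ0 := norm_pos_iff.2 hθ
  have hhalf : ‖θ‖ / 2 ≤ ‖θ - ζ‖ := by linarith [norm_sub_norm_le θ ζ]
  calc |gradLog j (θ - ζ) - gradLog j θ| ≤ ‖θ - ζ - θ‖ / (‖θ - ζ‖ * ‖θ‖) :=
        abs_gradLog_sub_gradLog_le j (norm_pos_iff.1 (by linarith)) hθ
    _ = ‖ζ‖ / (‖θ - ζ‖ * ‖θ‖) := by rw [sub_sub_cancel_left, norm_neg]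
    _ ≤ k / (‖θ‖ / 2 * ‖θ‖) := by gcongr; exact (norm_nonneg ζ).trans hζ
    _ = 2 * k / ‖θ‖ ^ 2 := by field_simp

theorem abs_setIntegral_ball_mul_gradLog_sub_sub_le (hf : Integrable f) (hf0 : ∀ z, 0 ≤ f z)
    {k : ℝ} {θ : E2} (hθ : θ ≠ 0) (hk : 2 * k ≤ ‖θ‖) (j : Fin 2)
    (hfθ : IntegrableOn (fun z => f z * gradLog j (θ - z)) (ball 0 k)) :
    |(∫ z in ball (0 : E2) k, f z * gradLog j (θ - z)) -
        (∫ z in ball (0 : E2) k, f z) * gradLog j θ| ≤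
      (∫ z in ball (0 : E2) k, f z) * (2 * k / ‖θ‖ ^ 2) := by
  have hfc (c : ℝ) : IntegrableOn (fun z => f z * c) (ball 0 k) := hf.integrableOn.mul_const c
  rw [← integral_mul_const, ← integral_mul_const, ← integral_sub hfθ (hfc _)]
  refine norm_integral_le_of_norm_le
    (f := fun z => f z * gradLog j (θ - z) - f z * gradLog j θ) (hfc _)
    ((ae_restrict_mem measurableSet_ball).mono fun z hz => ?_)
  rw [← mul_sub, Real.norm_eq_abs, abs_mul, abs_of_nonneg (hf0 z)]
  exact mul_le_mul_of_nonneg_left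
    (abs_gradLog_sub_sub_gradLog_le j hθ hk (mem_ball_zero_iff.1 hz).le) (hf0 z)

theorem abs_integral_mul_gradLog_sub_sub_le (hf : Integrable f) (hf0 : ∀ z, 0 ≤ f z) {k a B : ℝ}
    {θ : E2} (hθ : θ ≠ 0) (hk : 2 * k ≤ ‖θ‖) (ha : 0 < a) (hB : ∀ z ∈ ball θ a, f z ≤ B)
    (j : Fin 2) :
    |(∫ z, f z * gradLog j (θ - z)) - (∫ z in ball (0 : E2) k, f z) * gradLog j θ| ≤
      (∫ z in ball (0 : E2) k, f z) * (2 * k / ‖θ‖ ^ 2) +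
        (2 * π * a * B + (∫ z in (ball (0 : E2) k)ᶜ, f z) / a) := by
  have hint : Integrable fun z => f z * gradLog j (θ - z) :=
    integrable_mul_gradLog_sub hf ha (fun z hz => (abs_of_nonneg (hf0 z)).trans_le (hB z hz)) j
  have hinner := abs_setIntegral_ball_mul_gradLog_sub_sub_le hf hf0 hθ hk j hint.integrableOn
  have houter : |∫ z in (ball (0 : E2) k)ᶜ, f z * gradLog j (θ - z)| ≤
      2 * π * a * B + (∫ z in (ball (0 : E2) k)ᶜ, f z) / a := by
    have hS := (measurableSet_ball (x := (0 : E2)) (ε := k)).compl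
    simp only [← integral_indicator hS, Set.indicator_mul_left]
    refine abs_integral_mul_gradLog_sub_le (hf.indicator hS)
      (Set.indicator_nonneg fun z _ => hf0 z) ha (fun z hz => ?_) j
    exact (Set.indicator_le_self' (fun z _ => hf0 z) z).trans (hB z hz)
  rw [← integral_add_compl (measurableSet_ball (x := (0 : E2)) (ε := k)) hint, add_sub_right_comm]
  exact (abs_add_le _ _).trans (add_le_add hinner houter)

theorem IsRescaledSolution.abs_integral_density_mul_gradLog_sub_sub_le
    (h : IsRescaledSolution b M κ W v) {k a : ℝ} (hk : 0 < k) (ha : 0 < a) (ha₁ : a ≤ 1 / 8)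
    (hdecay : ∀ z, 2 * k ≤ ‖z‖ → κ * ‖z‖ ≤ 9 / 32 → ‖z‖ ^ 2 * Real.exp (v z) ≤ 324) {θ : E2}
    (hkθ : 4 * k ≤ ‖θ‖) (hθ : κ * ‖θ‖ ≤ 1 / 4) (j : Fin 2) :
    |(∫ z, density κ W v z * gradLog j (θ - z)) -
        (∫ z in ball (0 : E2) k, density κ W v z) * gradLog j θ| ≤
      ((∫ z in ball (0 : E2) k, density κ W v z) * (2 * k / ‖θ‖) + 1000 * π * b * a +
        (∫ z in (ball (0 : E2) k)ᶜ, density κ W v z) / a) / ‖θ‖ := by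
  have hθ0 : 0 < ‖θ‖ := by linarith
  have hdensity (z : E2) (hz : z ∈ ball θ (a * ‖θ‖)) :
      density κ W v z ≤ 500 * b / ‖θ‖ ^ 2 := by
    have hzθ : ‖z - θ‖ ≤ ‖θ‖ / 8 := by
      linarith [mem_ball_iff_norm.1 hz, mul_le_mul_of_nonneg_right ha₁ hθ0.le]
    have hlow : 7 / 8 * ‖θ‖ ≤ ‖z‖ := by linarith [norm_le_norm_add_norm_sub z θ]
    have hup : ‖z‖ ≤ 9 / 8 * ‖θ‖ := by linarith [norm_le_norm_add_norm_sub' z θ]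
    have hexp := hdecay z (by linarith)
      (by linarith [mul_le_mul_of_nonneg_left hup h.scale_pos.le])
    have hsq : (7 / 8 * ‖θ‖) ^ 2 * Real.exp (v z) ≤ 324 :=
      (mul_le_mul_of_nonneg_right (by gcongr) (Real.exp_nonneg _)).trans hexp
    calc density κ W v z ≤ b * Real.exp (v z) := h.density_le_mul_exp z
      _ ≤ b * (500 / ‖θ‖ ^ 2) := by
          refine mul_le_mul_of_nonneg_left ((le_div_iff₀ (by positivity)).2 ?_) h.bound_nonneg
          linarith
      _ = 500 * b / ‖θ‖ ^ 2 := by ring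
  refine (BlowUp.abs_integral_mul_gradLog_sub_sub_le h.integrable_density h.density_nonneg
    (norm_pos_iff.1 hθ0) (by linarith) (by positivity) hdensity j).trans_eq ?_
  field_simp
  ring

end NeckPotential

namespace IsBlowUpSequence

variable {b M V₀ : ℝ} {κ : ℕ → ℝ} {W v : ℕ → E2 → ℝ} {u₀ : E2 → ℝ}

theorem exists_integral_compl_ball_density_le (h : IsBlowUpSequence b M V₀ κ W v u₀) {η : ℝ}
    (hη : 0 < η) :
    ∃ k : ℝ, 1 ≤ k ∧ ∀ᶠ i in atTop,
      ∫ z in (ball (0 : E2) k)ᶜ, density (κ i) (W i) (v i) z ≤ η ∧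
        |(∫ z in ball (0 : E2) k, density (κ i) (W i) (v i) z) - 8 * π| ≤ η :=
  exists_integral_compl_ball_le (fun i => (h.isRescaledSolution i).integrable_density)
    (fun i => (h.isRescaledSolution i).density_nonneg)
    (fun i => (h.isRescaledSolution i).density_le)
    (fun i => (h.isRescaledSolution i).integral_density_le_localMass)
    h.tendsto_localMass h.integrable_limit h.integral_limit_eq h.tendsto_density hη

theorem exists_norm_sq_mul_exp_le (h : IsBlowUpSequence b M V₀ κ W v u₀) :
    ∃ c, 0 < c ∧ ∀ᶠ i in atTop,
      ∀ k, ∫ z in (ball (0 : E2) k)ᶜ, density (κ i) (W i) (v i) z < c →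
      ∀ z, 2 * k ≤ ‖z‖ → κ i * ‖z‖ ≤ 9 / 32 → ‖z‖ ^ 2 * Real.exp (v i z) ≤ 324 := by
  have hV₀ := h.limit_pos
  obtain ⟨c, hc, hdecay⟩ := BlowUp.exists_norm_sq_mul_exp_le M (m := 9 * π)
    (h.isRescaledSolution 0).bound_nonneg (by positivity) (half_pos hV₀)
  refine ⟨c, hc, ?_⟩
  filter_upwards [h.potential_near _ (half_pos hV₀),
    h.tendsto_localMass.eventually (gt_mem_nhds (by linarith [Real.pi_pos] : 8 * π < 9 * π))]
    with i hW hmass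
  refine hdecay (κ i) (W i) (v i) (h.isRescaledSolution i) hmass.le fun z hz => ?_
  linarith [(abs_le.1 (hW z hz)).1]

-- The four error terms: points of `ball 0 k`, points near `θ`, the remaining mass, and the
-- difference between the mass of `ball 0 k` and `8π`.
theorem exists_abs_integral_density_mul_gradLog_sub_sub_le
    (h : IsBlowUpSequence b M V₀ κ W v u₀) {ε : ℝ} (hε : 0 < ε) :
    ∃ k : ℝ, 1 ≤ k ∧ ∀ᶠ i in atTop, ∀ θ, k ≤ ‖θ‖ → κ i * ‖θ‖ ≤ 1 / 4 → ∀ j,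
      |(∫ z, density (κ i) (W i) (v i) z * gradLog j (θ - z)) - 8 * π * gradLog j θ| ≤
        4 * ε / ‖θ‖ := by
  have hb := (h.isRescaledSolution 0).bound_nonneg
  obtain ⟨c, hc, hdecay⟩ := h.exists_norm_sq_mul_exp_le
  set a := min (1 / 8) (ε / (1000 * π * (b + 1)))
  have ha : 0 < a := by positivity
  have hab : 1000 * π * b * a ≤ ε := calc
    1000 * π * b * a ≤ 1000 * π * (b + 1) * (ε / (1000 * π * (b + 1))) := by
      gcongr
      exacts [by linarith, min_le_right _ _]
    _ = ε := by field_simp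
  set η := min (min (a * ε) ε) (c / 2)
  have hη : 0 < η := by positivity
  have hηa : η ≤ a * ε := (min_le_left _ _).trans (min_le_left _ _)
  have hηε : η ≤ ε := (min_le_left _ _).trans (min_le_right _ _)
  obtain ⟨k, hk, hmass⟩ := h.exists_integral_compl_ball_density_le hη
  refine ⟨max (4 * k) ((8 * π + ε) * (2 * k) / ε), le_max_of_le_left (by linarith), ?_⟩
  filter_upwards [hdecay, hmass] with i hdecay ⟨hcompl, hball⟩ θ hθ hκθ j
  have hkθ := (le_max_left _ _).trans hθ
  have hθ0 : 0 < ‖θ‖ := by linarith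
  have hpotential := (h.isRescaledSolution i).abs_integral_density_mul_gradLog_sub_sub_le
    (by linarith) ha (min_le_left _ _)
    (hdecay k (hcompl.trans_lt ((min_le_right _ _).trans_lt (half_lt_self hc)))) hkθ hκθ j
  set I := ∫ z in ball (0 : E2) k, density (κ i) (W i) (v i) z
  have hnear : I * (2 * k / ‖θ‖) ≤ ε := by
    rw [← mul_div_assoc, div_le_iff₀ hθ0]
    have := (div_le_iff₀ hε).1 ((le_max_right _ _).trans hθ)
    have := mul_le_mul_of_nonneg_right
      (by linarith [(abs_le.1 hball).2] : I ≤ 8 * π + ε) (by linarith : 0 ≤ 2 * k)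
    linarith
  have hrest : (∫ z in (ball (0 : E2) k)ᶜ, density (κ i) (W i) (v i) z) / a ≤ ε :=
    (div_le_iff₀' ha).2 (hcompl.trans hηa)
  have hdefect : |I * gradLog j θ - 8 * π * gradLog j θ| ≤ ε / ‖θ‖ := by
    rw [← sub_mul, abs_mul, div_eq_mul_inv]
    exact mul_le_mul (hball.trans hηε) (abs_gradLog_le j θ) (abs_nonneg _) hε.le
  calc _ ≤ _ := abs_sub_le _ (I * gradLog j θ) _
    _ ≤ 3 * ε / ‖θ‖ + ε / ‖θ‖ := by
        refine add_le_add (hpotential.trans ?_) hdefect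
        gcongr
        linarith
    _ = 4 * ε / ‖θ‖ := by ring

theorem exists_abs_pd_add_four_mul_gradLog_le (h : IsBlowUpSequence b M V₀ κ W v u₀) :
    ∃ C, 0 ≤ C ∧ ∀ ε, 0 < ε → ∃ k : ℝ, 1 ≤ k ∧ ∀ᶠ i in atTop, ∀ θ, k ≤ ‖θ‖ →
      κ i * ‖θ‖ ≤ 1 / 4 → ∀ j, |pd j (v i) θ + 4 * gradLog j θ| ≤ ε / ‖θ‖ + C * κ i := by
  obtain ⟨C, hC0, hC⟩ := exists_abs_two_pi_mul_pd_add_le M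
  refine ⟨C, hC0, fun ε hε => ?_⟩
  obtain ⟨k, hk, hpotential⟩ := h.exists_abs_integral_density_mul_gradLog_sub_sub_le hε
  refine ⟨k, hk, hpotential.mono fun i hi θ hkθ hθ j => ?_⟩
  have hrep := hC b (κ i) (W i) (v i) (h.isRescaledSolution i) j θ (by linarith)
  have hκ : 0 ≤ C * κ i := mul_nonneg hC0 (h.isRescaledSolution i).scale_pos.le
  have hscaled : 2 * π * |pd j (v i) θ + 4 * gradLog j θ| ≤ 4 * ε / ‖θ‖ + C * κ i := by
    set P := ∫ z, density (κ i) (W i) (v i) z * gradLog j (θ - z)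
    calc 2 * π * |pd j (v i) θ + 4 * gradLog j θ|
        = |2 * π * (pd j (v i) θ + 4 * gradLog j θ)| := by rw [abs_mul, abs_of_pos Real.two_pi_pos]
      _ = |(2 * π * pd j (v i) θ + P) - (P - 8 * π * gradLog j θ)| := by ring_nf
      _ ≤ |2 * π * pd j (v i) θ + P| + |P - 8 * π * gradLog j θ| := abs_sub _ _
      _ ≤ 4 * ε / ‖θ‖ + C * κ i := by linarith [hi θ hkθ hθ j]
  have hpi : 4 * |pd j (v i) θ + 4 * gradLog j θ| ≤ 2 * π * |pd j (v i) θ + 4 * gradLog j θ| := by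
    gcongr
    linarith [Real.pi_gt_three]
  linarith [mul_div_assoc 4 ε ‖θ‖]

theorem abs_pd_limit_add_four_mul_gradLog_le (h : IsBlowUpSequence b M V₀ κ W v u₀) {C ε k : ℝ}
    (hest : ∀ᶠ i in atTop, ∀ θ, k ≤ ‖θ‖ → κ i * ‖θ‖ ≤ 1 / 4 → ∀ j,
      |pd j (v i) θ + 4 * gradLog j θ| ≤ ε / ‖θ‖ + C * κ i) {θ : E2} (hθ : k ≤ ‖θ‖) (j : Fin 2) :
    |pd j u₀ θ + 4 * gradLog j θ| ≤ ε / ‖θ‖ := by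
  have hlim : Tendsto (fun i => ε / ‖θ‖ + C * κ i) atTop (𝓝 (ε / ‖θ‖)) := by
    simpa using (h.tendsto_scale.const_mul C).const_add (ε / ‖θ‖)
  refine le_of_tendsto_of_tendsto ((h.tendsto_pd j θ).add_const _).abs hlim ?_
  filter_upwards [hest, h.eventually_scale_mul_norm_lt_at θ (by norm_num : (0 : ℝ) < 1 / 4)]
    with i hi hκ
  exact hi θ hθ hκ.le j

end IsBlowUpSequence

section Ray

theorem abs_sub_le_of_abs_deriv_le {F F' : ℝ → ℝ} {k ρ e c : ℝ} (hk : 0 < k) (hkρ : k ≤ ρ)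
    (hF : ∀ s ∈ Set.Icc k ρ, HasDerivAt F (F' s) s)
    (hF' : ∀ s ∈ Set.Icc k ρ, |F' s| ≤ e / s + c) :
    |F ρ - F k| ≤ e * (Real.log ρ - Real.log k) + c * (ρ - k) := by
  have hB (s : ℝ) (hs : s ∈ Set.Icc k ρ) : HasDerivAt
      (fun t => e * (Real.log t - Real.log k) + c * (t - k)) (e / s + c) s := by
    have hlog := (Real.hasDerivAt_log (hk.trans_le hs.1).ne').sub_const (Real.log k)
    simpa [div_eq_mul_inv] using!
      (hlog.const_mul e).add (((hasDerivAt_id s).sub_const k).const_mul c)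
  exact image_norm_le_of_norm_deriv_right_le_deriv_boundary' (f := fun s => F s - F k)
    (fun s hs => ((hF s hs).sub_const _).continuousAt.continuousWithinAt)
    (fun s hs => ((hF s (Set.Ico_subset_Icc_self hs)).sub_const _).hasDerivWithinAt)
    (by simp) (fun s hs => (hB s hs).continuousAt.continuousWithinAt)
    (fun s hs => (hB s (Set.Ico_subset_Icc_self hs)).hasDerivWithinAt)
    (fun s hs => hF' s (Set.Ico_subset_Icc_self hs)) (Set.right_mem_Icc.2 hkρ)

theorem hasDerivAt_comp_smul_add_four_mul_log {v : E2 → ℝ} {ω : E2} (hω : ‖ω‖ = 1) {s : ℝ}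
    (hs : 0 < s) (hv : DifferentiableAt ℝ v (s • ω)) :
    HasDerivAt (fun t : ℝ => v (t • ω) + 4 * Real.log t)
      (ω 0 * (pd 0 v (s • ω) + 4 * gradLog 0 (s • ω)) +
        ω 1 * (pd 1 v (s • ω) + 4 * gradLog 1 (s • ω))) s := by
  have hray : HasDerivAt (fun t : ℝ => t • ω) ω s := by
    simpa using (hasDerivAt_id s).smul_const ω
  refine ((hv.hasFDerivAt.comp_hasDerivAt s hray).add
    ((Real.hasDerivAt_log hs.ne').const_mul 4)).congr_deriv ?_
  have hradial := apply_mul_gradLog_add (norm_pos_iff.1 (by linarith : 0 < ‖ω‖))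
  rw [fderiv_apply_eq_pd, gradLog_smul, gradLog_smul]
  linear_combination (-4 * s⁻¹) * hradial

theorem abs_add_four_mul_log_sub_le {v : E2 → ℝ} {ω : E2} (hω : ‖ω‖ = 1) {k ρ e c : ℝ}
    (hk : 0 < k) (hkρ : k ≤ ρ)
    (hv : ∀ w, k ≤ ‖w‖ → ‖w‖ ≤ ρ → DifferentiableAt ℝ v w)
    (hpd : ∀ w, k ≤ ‖w‖ → ‖w‖ ≤ ρ → ∀ j, |pd j v w + 4 * gradLog j w| ≤ e / ‖w‖ + c) :
    |(v (ρ • ω) + 4 * Real.log ρ) - (v (k • ω) + 4 * Real.log k)| ≤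
      2 * e * (Real.log ρ - Real.log k) + 2 * c * (ρ - k) := by
  have hnorm (s : ℝ) (hs : s ∈ Set.Icc k ρ) : ‖s • ω‖ = s := by
    rw [norm_smul_of_nonneg (hk.le.trans hs.1), hω, mul_one]
  refine abs_sub_le_of_abs_deriv_le hk hkρ (fun s hs => hasDerivAt_comp_smul_add_four_mul_log hω
    (hk.trans_le hs.1) (hv _ ((hnorm s hs).symm ▸ hs.1) ((hnorm s hs).symm ▸ hs.2)))
    fun s hs => ?_
  have hcoord (j : Fin 2) :
      |ω j * (pd j v (s • ω) + 4 * gradLog j (s • ω))| ≤ 1 * (e / s + c) := by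
    have hest := hpd (s • ω) (by rw [hnorm s hs]; exact hs.1) (by rw [hnorm s hs]; exact hs.2) j
    rw [hnorm s hs] at hest
    rw [abs_mul]
    exact mul_le_mul ((abs_apply_le_norm ω j).trans_eq hω) hest (abs_nonneg _) zero_le_one
  calc _ ≤ _ := abs_add_le _ _
    _ ≤ 1 * (e / s + c) + 1 * (e / s + c) := add_le_add (hcoord 0) (hcoord 1)
    _ = 2 * e / s + 2 * c := by ring

end Ray

namespace IsBlowUpSequence

variable {b M V₀ : ℝ} {κ : ℕ → ℝ} {W v : ℕ → E2 → ℝ} {u₀ : E2 → ℝ}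

theorem exists_forall_closedBall_abs_le (h : IsBlowUpSequence b M V₀ κ W v u₀) (k : ℝ) :
    ∃ N, 0 ≤ N ∧ ∀ᶠ i in atTop, ∀ w ∈ closedBall 0 k, |v i w| ≤ N := by
  have hcompact := isCompact_closedBall (0 : E2) k
  obtain ⟨N, hN⟩ := hcompact.exists_bound_of_continuousOn
    h.differentiable_limit.continuous.continuousOn
  refine ⟨|N| + 1, by positivity, ?_⟩
  filter_upwards [Metric.tendstoUniformlyOn_iff.1 (h.tendstoUniformlyOn _ hcompact) 1 one_pos]
    with i hi w hw
  have hclose := hi w hw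
  rw [dist_comm, Real.dist_eq] at hclose
  linarith [abs_sub_abs_le_abs_sub (v i w) (u₀ w), (hN w hw).trans (le_abs_self N),
    Real.norm_eq_abs (u₀ w)]

theorem exists_abs_add_four_mul_log_le (h : IsBlowUpSequence b M V₀ κ W v u₀) {ε : ℝ}
    (hε : 0 < ε) :
    ∃ k : ℝ, 1 ≤ k ∧ ∃ N, 0 < N ∧ ∀ᶠ i in atTop, ∀ θ, k ≤ ‖θ‖ → κ i * ‖θ‖ ≤ 1 / 4 →
      |v i θ + 4 * Real.log ‖θ‖| ≤ ε * Real.log ‖θ‖ + N := by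
  obtain ⟨C, hC, hest⟩ := h.exists_abs_pd_add_four_mul_gradLog_le
  obtain ⟨k, hk, hest⟩ := hest (ε / 2) (half_pos hε)
  obtain ⟨N, hN, hbound⟩ := h.exists_forall_closedBall_abs_le k
  have hlogk : 0 ≤ Real.log k := Real.log_nonneg hk
  refine ⟨k, hk, N + 4 * Real.log k + C + 1, by positivity, ?_⟩
  filter_upwards [hest, hbound] with i hest hbound θ hkθ hθ
  have hκ := (h.isRescaledSolution i).scale_pos
  have hθ0 : 0 < ‖θ‖ := by linarith
  have hregion (w : E2) (hw : ‖w‖ ≤ ‖θ‖) : κ i * ‖w‖ ≤ 1 / 4 :=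
    (mul_le_mul_of_nonneg_left hw hκ.le).trans hθ
  have hω : ‖‖θ‖⁻¹ • θ‖ = 1 := norm_smul_inv_norm (𝕜 := ℝ) (norm_pos_iff.1 hθ0)
  have hray := abs_add_four_mul_log_sub_le (v := v i) hω (by linarith) hkθ
    (fun w _ hw => ((h.isRescaledSolution i).contDiffAt w
      (by linarith [hregion w hw])).differentiableAt two_ne_zero)
    (fun w hkw hw j => hest w hkw (hregion w hw) j)
  rw [smul_inv_smul₀ hθ0.ne'] at hray
  set w := k • ‖θ‖⁻¹ • θ
  have hw : ‖w‖ = k := by rw [norm_smul_of_nonneg (by linarith), hω, mul_one]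
  have hstart : |v i w + 4 * Real.log k| ≤ N + 4 * Real.log k := (abs_add_le _ _).trans
    (add_le_add (hbound w (by simp [hw])) (abs_of_nonneg (by positivity)).le)
  have hdrift : 2 * (C * κ i) * (‖θ‖ - k) ≤ C := by
    have hk0 : 0 ≤ C * κ i * k := by positivity
    linarith [mul_le_mul_of_nonneg_left hθ hC]
  have hlog : 2 * (ε / 2) * (Real.log ‖θ‖ - Real.log k) ≤ ε * Real.log ‖θ‖ := by
    linarith [mul_nonneg hε.le hlogk]
  linarith [abs_sub_abs_le_abs_sub (v i θ + 4 * Real.log ‖θ‖) (v i w + 4 * Real.log k)]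

theorem exists_abs_pd_sub_pd_limit_le (h : IsBlowUpSequence b M V₀ κ W v u₀) {ε : ℝ}
    (hε : 0 < ε) :
    ∃ k : ℝ, 1 ≤ k ∧ ∃ C, 0 < C ∧ ∀ᶠ i in atTop, ∀ θ, k ≤ ‖θ‖ → κ i * ‖θ‖ ≤ 1 / 4 →
      ∀ j, |pd j (v i) θ - pd j u₀ θ| ≤ ε / ‖θ‖ + C * κ i ^ 2 * ‖θ‖ := by
  obtain ⟨C, -, hest⟩ := h.exists_abs_pd_add_four_mul_gradLog_le
  obtain ⟨k, hk, hest⟩ := hest (ε / 4) (by positivity)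
  refine ⟨k, hk, C ^ 2 / (2 * ε) + 1, by positivity, ?_⟩
  filter_upwards [hest] with i hi θ hkθ hθ j
  have hθ0 : 0 < ‖θ‖ := by linarith
  have hlimit := h.abs_pd_limit_add_four_mul_gradLog_le hest hkθ j
  have hdiff := abs_sub (pd j (v i) θ + 4 * gradLog j θ) (pd j u₀ θ + 4 * gradLog j θ)
  rw [add_sub_add_right_eq_sub] at hdiff
  have hamgm : C * κ i ≤ ε / 2 / ‖θ‖ + C ^ 2 / (2 * ε) * κ i ^ 2 * ‖θ‖ := by
    have hsq : ε / 2 / ‖θ‖ + C ^ 2 / (2 * ε) * κ i ^ 2 * ‖θ‖ - C * κ i =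
        (ε - C * κ i * ‖θ‖) ^ 2 / (2 * ε * ‖θ‖) := by
      field_simp
      ring
    exact sub_nonneg.1 (hsq ▸ by positivity)
  have hextra : 0 ≤ κ i ^ 2 * ‖θ‖ := by positivity
  calc |pd j (v i) θ - pd j u₀ θ| ≤ ε / 4 / ‖θ‖ + C * κ i + ε / 4 / ‖θ‖ := by
        linarith [hi θ hkθ hθ j]
    _ ≤ ε / 4 / ‖θ‖ + (ε / 2 / ‖θ‖ + C ^ 2 / (2 * ε) * κ i ^ 2 * ‖θ‖) + ε / 4 / ‖θ‖ +
          κ i ^ 2 * ‖θ‖ := by linarith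
    _ = ε / ‖θ‖ + (C ^ 2 / (2 * ε) + 1) * κ i ^ 2 * ‖θ‖ := by ring

end IsBlowUpSequence

section BoundaryBlowUp

theorem norm_add_infDist_sphere_le {E : Type*} [NormedAddCommGroup E] [NormedSpace ℝ E]
    [Nontrivial E] {x : E} {R : ℝ} (hx : ‖x‖ ≤ R) : ‖x‖ + infDist x (sphere 0 R) ≤ R := by
  obtain ⟨ω, hω, hxω⟩ : ∃ ω : E, ‖ω‖ = 1 ∧ ‖x‖ • ω = x := by
    rcases eq_or_ne x 0 with rfl | hx0
    · simpa using exists_norm_eq E zero_le_one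
    · exact ⟨‖x‖⁻¹ • x, norm_smul_inv_norm (𝕜 := ℝ) hx0, smul_inv_smul₀ (norm_ne_zero_iff.2 hx0) x⟩
  have hmem : R • ω ∈ sphere (0 : E) R := by
    rw [mem_sphere_zero_iff_norm, norm_smul_of_nonneg ((norm_nonneg x).trans hx), hω, mul_one]
  have hdist : dist x (R • ω) = R - ‖x‖ := by
    rw [dist_comm, dist_eq_norm]
    nth_rw 1 [← hxω]
    rw [← sub_smul, norm_smul_of_nonneg (sub_nonneg.2 hx), hω, mul_one]
  linarith [infDist_le_dist_of_mem hmem (x := x)]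

theorem infDist_sphere_pos {x : E2} (hx : x ∈ ball 0 1) : 0 < infDist x (sphere 0 1) := by
  refine (isClosed_sphere.notMem_iff_infDist_pos
    ((NormedSpace.sphere_nonempty (E := E2)).2 zero_le_one)).1 ?_
  rw [mem_sphere_zero_iff_norm]
  exact (mem_ball_zero_iff.1 hx).ne

theorem eventually_forall_abs_sub_le_of_holder {V : ℕ → E2 → ℝ} {x_ : ℕ → E2} {δ : ℕ → ℝ}
    {A s V₀ : ℝ} (hs : 0 < s)
    (hVhol : ∀ i, ∀ x ∈ ball 0 1, ∀ y ∈ ball 0 1, |V i x - V i y| ≤ A * ‖x - y‖ ^ s)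
    (hxmem : ∀ i, x_ i ∈ ball 0 1) (hδ₁ : ∀ i, ‖x_ i‖ + δ i ≤ 1) (hδ0 : Tendsto δ atTop (𝓝 0))
    (hV₀ : Tendsto (fun i => V i (x_ i)) atTop (𝓝 V₀)) {η : ℝ} (hη : 0 < η) :
    ∀ᶠ i in atTop, ∀ y, ‖y‖ < δ i → |V i (x_ i + y) - V₀| ≤ η := by
  have hlim : Tendsto (fun i => |A| * δ i ^ s + |V i (x_ i) - V₀|) atTop (𝓝 0) := by
    simpa [Real.zero_rpow hs.ne'] using
      ((hδ0.rpow_const (Or.inr hs.le)).const_mul |A|).add (hV₀.sub_const V₀).abs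
  filter_upwards [hlim.eventually (gt_mem_nhds hη)] with i hi y hy
  have hmem : x_ i + y ∈ ball 0 1 :=
    mem_ball_zero_iff.2 ((norm_add_le _ _).trans_lt (by linarith [hδ₁ i]))
  have hholder : |V i (x_ i + y) - V i (x_ i)| ≤ |A| * δ i ^ s := calc
    _ ≤ A * ‖x_ i + y - x_ i‖ ^ s := hVhol i _ hmem _ (hxmem i)
    _ ≤ |A| * δ i ^ s := by
      rw [add_sub_cancel_left]
      gcongr
      exact le_abs_self A
  linarith [abs_sub_le (V i (x_ i + y)) (V i (x_ i)) V₀]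

end BoundaryBlowUp

end BlowUp

theorem stmt13_general
    (b A s : ℝ) (hs : 0 < s)
    (V u : ℕ → E2 → ℝ) (x_ : ℕ → E2) (δ r : ℕ → ℝ) (v : ℕ → E2 → ℝ)
    (hu : ∀ i, ContDiffOn ℝ 2 (u i) (closedBall (0 : E2) 1))
    (hVb : ∀ i, ∀ x ∈ ball (0 : E2) 1, 0 ≤ V i x ∧ V i x ≤ b)
    (hVhol : ∀ i, ∀ x ∈ ball (0 : E2) 1, ∀ y ∈ ball (0 : E2) 1,
      |V i x - V i y| ≤ A * ‖x - y‖ ^ s)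
    (hpde : ∀ i, ∀ x ∈ ball (0 : E2) 1, -(lapl (u i) x) = V i x * Real.exp (u i x))
    (hbc : ∀ i, ∀ x ∈ sphere (0 : E2) 1, u i x = 0)
    (hxmem : ∀ i, x_ i ∈ ball (0 : E2) 1)
    (hmax : ∀ i, ∀ y ∈ closedBall (0 : E2) 1, u i y ≤ u i (x_ i))
    (hδ : ∀ i, δ i = Metric.infDist (x_ i) (sphere (0 : E2) 1))
    (hδ0 : Tendsto δ atTop (nhds 0))
    (hr : ∀ i, r i = Real.exp (-(u i (x_ i)) / 2))
    (hrδ : Tendsto (fun i => r i / δ i) atTop (nhds 0))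
    (hmass : Tendsto (fun i => ∫ y in ball (x_ i) (δ i / 2), V i y * Real.exp (u i y)) atTop
      (nhds (8 * Real.pi)))
    (M : ℝ) (hM : ∀ i, ∀ y : E2, ‖y‖ = 3 / 8 → u i (x_ i + δ i • y) ≤ M)
    (hv : ∀ i θ, v i θ = u i (x_ i + r i • θ) - u i (x_ i))
    (u₀ : E2 → ℝ) (V₀ : ℝ) (hV₀pos : 0 < V₀)
    (hV₀ : Tendsto (fun i => V i (x_ i)) atTop (nhds V₀))
    (hconv : ∀ K : Set E2, IsCompact K → TendstoUniformlyOn v u₀ atTop K ∧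
      TendstoUniformlyOn (fun i => fderiv ℝ (v i)) (fderiv ℝ u₀) atTop K) :
    ∀ ε : ℝ, 0 < ε → ∀ ε' : ℝ, ε' ≤ 1 / 4 →
      ∃ k > (0 : ℝ), ∃ i₀ : ℕ, ∃ Cv > (0 : ℝ), ∃ C > (0 : ℝ),
        ∀ i ≥ i₀, ∀ θ : E2, k ≤ ‖θ‖ → ‖θ‖ ≤ δ i * ε' / r i →
          ((-4 - ε) * Real.log ‖θ‖ - Cv ≤ v i θ ∧ v i θ ≤ (-4 + ε) * Real.log ‖θ‖ + Cv) ∧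
          ∀ j : Fin 2, |pd j (v i) θ - pd j u₀ θ| ≤ ε / ‖θ‖ + C * (r i / δ i) ^ 2 * ‖θ‖ := by
  have hδpos (i : ℕ) : 0 < δ i := hδ i ▸ BlowUp.infDist_sphere_pos (hxmem i)
  have hrpos (i : ℕ) : 0 < r i := hr i ▸ Real.exp_pos _
  have hδ₁ (i : ℕ) : ‖x_ i‖ + δ i ≤ 1 :=
    hδ i ▸ BlowUp.norm_add_infDist_sphere_le (mem_ball_zero_iff.1 (hxmem i)).le
  obtain rfl : v = fun i θ => u i (x_ i + r i • θ) - u i (x_ i) := funext₂ hv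
  have hseq : BlowUp.IsBlowUpSequence b M V₀ (fun i => r i / δ i)
      (fun i z => V i (x_ i + r i • z)) (fun i z => u i (x_ i + r i • z) - u i (x_ i)) u₀ :=
    { isRescaledSolution := fun i => BlowUp.isRescaledSolution_of_isMaxOn (hu i) (hVb i) (hpde i)
        (hbc i) (hmax i) (hδpos i) (hδ₁ i) (hr i) (hM i)
      tendsto_scale := hrδ
      tendsto_localMass := by
        simpa only [BlowUp.localMass_comp_add_smul _ (hδpos _) (hr _)] using hmass
      limit_pos := hV₀pos
      potential_near := fun η hη => (BlowUp.eventually_forall_abs_sub_le_of_holder hs hVhol hxmem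
        hδ₁ hδ0 hV₀ hη).mono fun i hi z hz => hi _ (by
          rw [div_mul_eq_mul_div, div_le_iff₀ (hδpos i)] at hz
          rw [norm_smul_of_nonneg (hrpos i).le]
          linarith [hδpos i])
      tendstoUniformlyOn := fun K hK => (hconv K hK).1
      tendstoUniformlyOn_fderiv := fun K hK => (hconv K hK).2 }
  intro ε hε ε' hε'
  obtain ⟨k, hk, Cv, hCv, hlog⟩ := hseq.exists_abs_add_four_mul_log_le hε
  obtain ⟨k', -, C, hC, hgrad⟩ := hseq.exists_abs_pd_sub_pd_limit_le hε
  obtain ⟨i₀, hi₀⟩ := eventually_atTop.1 (hlog.and hgrad)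
  refine ⟨max k k', by positivity, i₀, Cv, hCv, C, hC, fun i hi θ hθ hθ' => ?_⟩
  have hκ : r i / δ i * ‖θ‖ ≤ 1 / 4 := by
    rw [div_mul_eq_mul_div, div_le_iff₀ (hδpos i)]
    linarith [(le_div_iff₀ (hrpos i)).1 hθ', mul_le_mul_of_nonneg_left hε' (hδpos i).le]
  obtain ⟨hlog, hgrad⟩ := hi₀ i hi
  have hlog := abs_le.1 (hlog θ ((le_max_left _ _).trans hθ) hκ)
  exact ⟨⟨by linarith, by linarith⟩, hgrad θ ((le_max_right _ _).trans hθ) hκ⟩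

theorem stmt13
    (b A s C₀ : ℝ) (hs1 : 1/2 < s) (hs2 : s ≤ 1)
    (V u : ℕ → E2 → ℝ) (x_ : ℕ → E2) (δ r : ℕ → ℝ) (v : ℕ → E2 → ℝ)
    (hu : ∀ i, ContDiffOn ℝ 2 (u i) (closedBall (0:E2) 1))
    (hVb : ∀ i, ∀ x ∈ ball (0:E2) 1, 0 ≤ V i x ∧ V i x ≤ b)
    (hVhol : ∀ i, ∀ x ∈ ball (0:E2) 1, ∀ y ∈ ball (0:E2) 1, |V i x - V i y| ≤ A * ‖x - y‖ ^ s)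
    (hpde : ∀ i, ∀ x ∈ ball (0:E2) 1, -(lapl (u i) x) = V i x * Real.exp (u i x))
    (hbc : ∀ i, ∀ x ∈ sphere (0:E2) 1, u i x = 0)
    (hint : ∀ i, (∫ y in ball (0:E2) 1, Real.exp (u i y)) ≤ C₀)
    (hxmem : ∀ i, x_ i ∈ ball (0:E2) 1)
    (hmax : ∀ i, ∀ y ∈ closedBall (0:E2) 1, u i y ≤ u i (x_ i))
    (hblow : Tendsto (fun i => u i (x_ i)) atTop atTop)
    (hδ : ∀ i, δ i = Metric.infDist (x_ i) (sphere (0:E2) 1))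
    (hδ0 : Tendsto δ atTop (nhds 0))
    (hr : ∀ i, r i = Real.exp (-(u i (x_ i)) / 2))
    (hrδ : Tendsto (fun i => r i / δ i) atTop (nhds 0))
    (hmass : Tendsto (fun i => ∫ y in ball (x_ i) (δ i / 2), V i y * Real.exp (u i y)) atTop
      (nhds (8 * Real.pi)))
    (hbound : ∀ ε : ℝ, 0 < ε → ε < 1 → ∃ Cε : ℝ, ∀ i, ∀ y : E2, ‖y‖ = ε →
      u i (x_ i + δ i • y) ≤ Cε)
    (hv : ∀ i θ, v i θ = u i (x_ i + r i • θ) - u i (x_ i))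
    (y_ t_ : ℕ → E2)
    (hymem : ∀ i, y_ i ∈ ball (0:E2) 1) (htmem : ∀ i, t_ i ∈ ball (0:E2) 1)
    (hyblow : Tendsto (fun i => u i (y_ i)) atTop atTop)
    (htblow : Tendsto (fun i => u i (t_ i)) atTop atTop)
    (u₀ : E2 → ℝ) (V₀ : ℝ) (hV₀pos : 0 < V₀)
    (hV₀ : Tendsto (fun i => V i (x_ i)) atTop (nhds V₀))
    (hu₀ : ∀ x : E2, -(lapl u₀ x) = V₀ * Real.exp (u₀ x))
    (hconv : ∀ K : Set E2, IsCompact K →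
      TendstoUniformlyOn (fun i θ => v i θ) u₀ atTop K ∧
      TendstoUniformlyOn (fun i θ => fderiv ℝ (v i) θ) (fderiv ℝ u₀) atTop K ∧
      TendstoUniformlyOn (fun i θ => fderiv ℝ (fun w => fderiv ℝ (v i) w) θ)
        (fderiv ℝ (fun w => fderiv ℝ u₀ w)) atTop K) :
    ∀ ε : ℝ, 0 < ε → ∀ ε' : ℝ, ε' ∈ Set.Ioo (0:ℝ) (1/4) →
      ∃ k > (0:ℝ), ∃ i₀ : ℕ, ∃ Cv > (0:ℝ), ∃ C > (0:ℝ), ∃ C₁ > (0:ℝ), ∃ C₂ > (0:ℝ), ∃ m : ℝ,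
        ∀ i ≥ i₀, ∀ θ : E2, k ≤ ‖θ‖ → ‖θ‖ ≤ δ i * ε' / r i →
          ((-4 - ε) * Real.log ‖θ‖ - Cv ≤ v i θ ∧ v i θ ≤ (-4 + ε) * Real.log ‖θ‖ + Cv) ∧
          ∀ j : Fin 2, |pd j (v i) θ - pd j u₀ θ - m * (r i / δ i)| ≤
            ε / ‖θ‖ + C * (r i / δ i) ^ 2 * ‖θ‖ + C₁ * (r i / dist (x_ i) (y_ i)) +
              C₂ * (r i / dist (x_ i) (t_ i)) := by
  intro ε hε ε' hε'
  obtain ⟨M, hM⟩ := hbound (3 / 8) (by norm_num) (by norm_num)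
  obtain ⟨k, hk, i₀, Cv, hCv, C, hC, hest⟩ := stmt13_general b A s (by linarith) V u x_ δ r v hu hVb
    hVhol hpde hbc hxmem hmax hδ hδ0 hr hrδ hmass M hM hv u₀ V₀ hV₀pos hV₀
    (fun K hK => ⟨(hconv K hK).1, (hconv K hK).2.1⟩) ε hε ε' hε'.2.le
  refine ⟨k, hk, i₀, Cv, hCv, C, hC, 1, one_pos, 1, one_pos, 0, fun i hi θ hθ hθ' =>
    (hest i hi θ hθ hθ').imp_right fun hgrad j => ?_⟩
  have hr_nonneg : 0 ≤ r i := hr i ▸ (Real.exp_pos _).le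
  rw [zero_mul, sub_zero, one_mul, one_mul, add_assoc]
  exact (hgrad j).trans (le_add_of_nonneg_right (by positivity))
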